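/- arXiv:1409.4912 — 3 statements merged into one kernel-verified Lean document; each statement's English description precedes it below -/
import Mathlib

section
/- Let b ≥ 2 be an integer. There exists a positive real constant C (depending only on b) such that for every integer n ≥ 3, the sum of the digits of n! in base b satisfies s_b(n!) > C · log n · log log log n (where log denotes the natural logarithm; for 3 ≤ n ≤ e^e the right-hand side is nonpositive and the inequality is understood accordingly). -/
/-!
A positive multiple of `b ^ k - 1` has base-`b` digit sum at least `k * (b - 1)` (Stolarsky):
folding `m = q * b ^ k + r` into `q + r` preserves the residue modulo `b ^ k - 1` and, since digit
sums are subadditive, does not increase the digit sum; the folding stops at `b ^ k - 1` itself.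

The cyclotomic factorisation `b ^ k - 1 = ∏ d ∣ k, Φ_d(b)`, with `Φ_d(b) ≤ (b + 1) ^ φ(k)`, makes
`b ^ k - 1` divide `n !` as soon as `k * (b + 1) ^ φ(k) ≤ n`. So `φ(k)` may be as large as
`X ≍ log n`, and a suitable multiple `k` of `⌊√(log X)⌋ !` exceeds its totient by a factor of order
`log (log X)`, because `k / φ(k)` is at least the sum of the inverses of the divisors of `k`.
-/

open Filter Asymptotics
open scoped Nat

theorem sum_digits_eq_mod_add_sum_digits_div (b m : ℕ) :
    (b.digits m).sum = m % b + (b.digits (m / b)).sum := by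
  match b with
  | 0 => cases m <;> simp
  | 1 => simp [Nat.mod_one]
  | b + 2 =>
    rcases m.eq_zero_or_pos with rfl | hm
    · simp
    · rw [Nat.digits_def' (by lia) hm, List.sum_cons]

theorem sum_digits_eq_sum_digits_mod_add_sum_digits_div (b k m : ℕ) :
    (b.digits m).sum = (b.digits (m % b ^ k)).sum + (b.digits (m / b ^ k)).sum := by
  induction k generalizing m with
  | zero => simp [Nat.mod_one]
  | succ k ih =>
    rw [sum_digits_eq_mod_add_sum_digits_div b m, ih (m / b),
      sum_digits_eq_mod_add_sum_digits_div b (m % b ^ (k + 1)), Nat.div_div_eq_div_mul, pow_succ',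
      Nat.mod_mul_right_mod, Nat.mod_mul_right_div_self, add_assoc]

theorem sum_digits_add_le (b m n : ℕ) :
    (b.digits (m + n)).sum ≤ (b.digits m).sum + (b.digits n).sum := by
  -- Legendre's formula `m - s_b(m) = (b - 1) * ∑ i, m / b ^ (i + 1)`, whose sum is superadditive.
  let quotientSum (l m : ℕ) := ∑ i ∈ Finset.range (Nat.log b l).succ, m / b ^ i.succ
  have quotientSum_mono {l l' : ℕ} (h : l ≤ l') (m : ℕ) : quotientSum l m ≤ quotientSum l' m :=
    Finset.sum_le_sum_of_subset
      (Finset.range_subset_range.2 (Nat.succ_le_succ (Nat.log_mono_right h)))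
  have quotientSum_add : quotientSum m m + quotientSum n n ≤ quotientSum (m + n) (m + n) :=
    calc quotientSum m m + quotientSum n n
        ≤ quotientSum (m + n) m + quotientSum (m + n) n :=
          add_le_add (quotientSum_mono (by lia) m) (quotientSum_mono (by lia) n)
      _ ≤ quotientSum (m + n) (m + n) := by
          rw [← Finset.sum_add_distrib]
          exact Finset.sum_le_sum fun _ _ => Nat.div_add_div_le_add_div
  have legendre (m : ℕ) : (b - 1) * quotientSum m m = m - (b.digits m).sum :=
    Nat.sub_one_mul_sum_log_div_pow_eq_sub_sum_digits m
  have key := Nat.mul_le_mul_left (b - 1) quotientSum_add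
  rw [mul_add, legendre, legendre, legendre] at key
  have := Nat.digit_sum_le b m
  have := Nat.digit_sum_le b n
  have := Nat.digit_sum_le b (m + n)
  lia

theorem sum_digits_pow_sub_one (b k : ℕ) : (b.digits (b ^ k - 1)).sum = k * (b - 1) := by
  rcases b.eq_zero_or_pos with rfl | hb
  · cases k <;> simp
  induction k with
  | zero => simp
  | succ k ih =>
    have hpow : b ^ (k + 1) - 1 = (b - 1) + b * (b ^ k - 1) := by
      have := Nat.le_mul_of_pos_right b (pow_pos hb k)
      rw [pow_succ', Nat.mul_sub]
      lia
    rw [sum_digits_eq_mod_add_sum_digits_div, hpow, Nat.add_mul_mod_self_left,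
      Nat.add_mul_div_left _ _ hb, Nat.mod_eq_of_lt (by lia), Nat.div_eq_of_lt (by lia), zero_add,
      ih]
    ring

theorem mul_sub_one_le_sum_digits_of_pow_sub_one_dvd {b k m : ℕ} (hm : 0 < m)
    (hdvd : b ^ k - 1 ∣ m) : k * (b - 1) ≤ (b.digits m).sum := by
  rcases le_or_gt b 1 with hb | hb
  · simp [Nat.sub_eq_zero_of_le hb]
  rcases k.eq_zero_or_pos with rfl | hk
  · simp
  have hpow : 1 < b ^ k := Nat.one_lt_pow hk.ne' hb
  induction m using Nat.strong_induction_on with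
  | _ m ih =>
    rcases lt_or_ge m (b ^ k) with hlt | hge
    · have heq : m = b ^ k - 1 := by
        have := Nat.le_of_dvd hm hdvd
        lia
      rw [heq, sum_digits_pow_sub_one]
    · have hq : 0 < m / b ^ k := Nat.div_pos hge (by lia)
      have hfold : m = (b ^ k - 1) * (m / b ^ k) + (m % b ^ k + m / b ^ k) := by
        have := Nat.div_add_mod m (b ^ k)
        have := Nat.le_mul_of_pos_left (m / b ^ k) (show 0 < b ^ k by lia)
        rw [Nat.sub_mul]
        lia
      have hfold_lt : m % b ^ k + m / b ^ k < m := by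
        have : 0 < (b ^ k - 1) * (m / b ^ k) := Nat.mul_pos (by lia) hq
        lia
      have hfold_dvd : b ^ k - 1 ∣ m % b ^ k + m / b ^ k :=
        (Nat.dvd_add_right (dvd_mul_right _ _)).1 (hfold ▸ hdvd)
      calc k * (b - 1) ≤ (b.digits (m % b ^ k + m / b ^ k)).sum :=
            ih _ hfold_lt (by lia) hfold_dvd
        _ ≤ (b.digits (m % b ^ k)).sum + (b.digits (m / b ^ k)).sum := sum_digits_add_le _ _ _
        _ = (b.digits m).sum := (sum_digits_eq_sum_digits_mod_add_sum_digits_div b k m).symm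

theorem sum_digits_pos {b m : ℕ} (hm : m ≠ 0) : 0 < (b.digits m).sum :=
  (Nat.pos_of_ne_zero (Nat.getLast_digit_ne_zero b hm)).trans_le
    (List.le_sum_of_mem (List.getLast_mem _))

theorem prod_dvd_factorial_sum {ι : Type*} (s : Finset ι) (f : ι → ℕ) (hf : ∀ i ∈ s, 0 < f i) :
    ∏ i ∈ s, f i ∣ (∑ i ∈ s, f i)! :=
  (Finset.prod_dvd_prod_of_dvd _ _ fun i hi => Nat.dvd_factorial (hf i hi) le_rfl).trans
    (Nat.prod_factorial_dvd_factorial_sum s f)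

theorem prod_natAbs_eval_cyclotomic {b k : ℕ} (hb : 0 < b) (hk : 0 < k) :
    ∏ d ∈ k.divisors, ((Polynomial.cyclotomic d ℤ).eval (b : ℤ)).natAbs = b ^ k - 1 := by
  have hprod : ∏ d ∈ k.divisors, (Polynomial.cyclotomic d ℤ).eval (b : ℤ) = (b ^ k - 1 : ℕ) := by
    rw [← Polynomial.eval_prod, Polynomial.prod_cyclotomic_eq_X_pow_sub_one hk]
    simp [Nat.cast_sub (Nat.one_le_pow k b hb)]
  exact (map_prod Int.natAbsHom _ _).symm.trans (congrArg Int.natAbs hprod)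

theorem natAbs_eval_cyclotomic_le {b : ℕ} (hb : 1 < b) (d : ℕ) :
    ((Polynomial.cyclotomic d ℤ).eval (b : ℤ)).natAbs ≤ (b + 1) ^ φ d := by
  have hreal := Polynomial.cyclotomic_eval_le_add_one_pow_totient (q := (b : ℝ))
    (by exact_mod_cast hb) d
  have hcast : (Polynomial.cyclotomic d ℝ).eval (b : ℝ) =
      ((Polynomial.cyclotomic d ℤ).eval (b : ℤ) : ℤ) := by
    simpa using Polynomial.eval_intCast_map (Int.castRingHom ℝ) (Polynomial.cyclotomic d ℤ) b
  have hpos : 0 < (Polynomial.cyclotomic d ℤ).eval (b : ℤ) :=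
    Polynomial.cyclotomic_pos' d (by exact_mod_cast hb)
  rw [hcast] at hreal
  zify
  rw [abs_of_pos hpos]
  exact_mod_cast hreal

theorem pow_sub_one_dvd_factorial {b k n : ℕ} (hb : 1 < b) (hk : 0 < k)
    (hn : k * (b + 1) ^ φ k ≤ n) : b ^ k - 1 ∣ n ! := by
  have hle : ∀ d ∈ k.divisors,
      ((Polynomial.cyclotomic d ℤ).eval (b : ℤ)).natAbs ≤ (b + 1) ^ φ k := fun d hd =>
    (natAbs_eval_cyclotomic_le hb d).trans <| Nat.pow_le_pow_right (by lia) <|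
      Nat.le_of_dvd (Nat.totient_pos.2 hk) (Nat.totient_dvd_of_dvd (Nat.dvd_of_mem_divisors hd))
  rw [← prod_natAbs_eval_cyclotomic (by lia) hk]
  refine (prod_dvd_factorial_sum _ _ fun d _ => Int.natAbs_pos.2
    (Polynomial.cyclotomic_pos' d (by exact_mod_cast hb)).ne').trans
      (Nat.factorial_dvd_factorial ?_)
  calc ∑ d ∈ k.divisors, ((Polynomial.cyclotomic d ℤ).eval (b : ℤ)).natAbs
      ≤ k.divisors.card * (b + 1) ^ φ k := by
        simpa only [smul_eq_mul] using Finset.sum_le_card_nsmul _ _ _ hle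
    _ ≤ k * (b + 1) ^ φ k := Nat.mul_le_mul_right _ k.card_divisors_le_self
    _ ≤ n := hn

theorem le_sum_digits_factorial {b k n : ℕ} (hb : 1 < b) (hk : 0 < k)
    (hn : k * (b + 1) ^ φ k ≤ n) : k ≤ (b.digits n !).sum :=
  (Nat.le_mul_of_pos_right k (by lia)).trans
    (mul_sub_one_le_sum_digits_of_pow_sub_one_dvd n.factorial_pos
      (pow_sub_one_dvd_factorial hb hk hn))

theorem totient_mul_le (m n : ℕ) : φ (m * n) ≤ φ m * n := by
  induction n using Nat.recOnMul generalizing m with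
  | zero => simp
  | one => simp
  | prime p hp =>
    rw [mul_comm m p, mul_comm (φ m) p]
    by_cases h : p ∣ m
    · rw [Nat.totient_mul_of_prime_of_dvd hp h]
    · rw [Nat.totient_mul_of_prime_of_not_dvd hp h]
      exact Nat.mul_le_mul_right _ (Nat.sub_le _ _)
  | mul x y hx hy =>
    rw [← mul_assoc, ← mul_assoc]
    exact (hy _).trans (Nat.mul_le_mul_right _ (hx m))

theorem sum_inv_divisors_mul_totient_le (n : ℕ) :
    (∑ d ∈ n.divisors, (d : ℝ)⁻¹) * φ n ≤ n := by
  have hle : ∀ d ∈ n.divisors, (d : ℝ)⁻¹ * φ n ≤ φ (n / d) := fun d hd => by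
    have hd0 : (0 : ℝ) < d := by exact_mod_cast Nat.pos_of_mem_divisors hd
    have := totient_mul_le (n / d) d
    rw [Nat.div_mul_cancel (Nat.dvd_of_mem_divisors hd)] at this
    rw [inv_mul_le_iff₀' hd0]
    exact_mod_cast this
  calc (∑ d ∈ n.divisors, (d : ℝ)⁻¹) * φ n
      ≤ ∑ d ∈ n.divisors, (φ (n / d) : ℝ) := by
        rw [Finset.sum_mul]
        exact Finset.sum_le_sum hle
    _ = n := by exact_mod_cast (Nat.sum_div_divisors n φ).trans n.sum_totient

theorem log_mul_totient_le {n y : ℕ} (h : Finset.Icc 1 y ⊆ n.divisors) :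
    Real.log (y + 1) * φ n ≤ n :=
  calc Real.log (y + 1) * φ n
      ≤ (∑ d ∈ Finset.Icc 1 y, (d : ℝ)⁻¹) * φ n := by
        gcongr
        simpa [harmonic_eq_sum_Icc] using log_add_one_le_harmonic y
    _ ≤ (∑ d ∈ n.divisors, (d : ℝ)⁻¹) * φ n := by gcongr
    _ ≤ n := sum_inv_divisors_mul_totient_le n

theorem Icc_one_subset_divisors_factorial (y : ℕ) : Finset.Icc 1 y ⊆ (y !).divisors := by
  intro d hd
  rw [Finset.mem_Icc] at hd
  exact Nat.mem_divisors.2 ⟨Nat.dvd_factorial hd.1 hd.2, y.factorial_ne_zero⟩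

theorem factorial_le_exp_sq (y : ℕ) : (y ! : ℝ) ≤ Real.exp ((y : ℝ) ^ 2) :=
  calc (y ! : ℝ) ≤ (y : ℝ) ^ y := by exact_mod_cast y.factorial_le_pow
    _ ≤ Real.exp y ^ y := by
        gcongr
        linarith [Real.add_one_le_exp (y : ℝ)]
    _ = Real.exp ((y : ℝ) ^ 2) := by rw [← Real.exp_nat_mul, sq]

theorem exists_totient_le_and_mul_le_mul_totient {N : ℕ} {X : ℝ} (hN : 0 < N) (hNX : N ≤ X) :
    ∃ k : ℕ, 0 < k ∧ φ k ≤ X ∧ k ≤ X ^ 2 ∧ X / 2 * N ≤ k * φ N := by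
  have hφ : (1 : ℝ) ≤ φ N := by exact_mod_cast Nat.totient_pos.2 hN
  have hφN : (φ N : ℝ) ≤ N := by exact_mod_cast N.totient_le
  have hX : 0 < X := by linarith
  set j := ⌊X / φ N⌋₊
  have hj : 0 < j := Nat.floor_pos.2 (by rw [le_div_iff₀ (by linarith)]; linarith)
  have hj' : (1 : ℝ) ≤ j := by exact_mod_cast hj
  have hj_le : j * φ N ≤ X := by
    rw [← le_div_iff₀ (by linarith)]
    exact Nat.floor_le (by positivity)
  have hlt_j : X < (j + 1) * φ N := by
    rw [← div_lt_iff₀ (by linarith)]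
    exact Nat.lt_floor_add_one _
  refine ⟨N * j, Nat.mul_pos hN hj, ?_, ?_, ?_⟩
  · calc (φ (N * j) : ℝ) ≤ φ N * j := by exact_mod_cast totient_mul_le N j
      _ ≤ X := by linarith
  · have : (j : ℝ) ≤ X := (le_mul_of_one_le_right j.cast_nonneg hφ).trans hj_le
    rw [Nat.cast_mul, sq]
    gcongr
  · have : X / 2 ≤ j * φ N := by
      have : (φ N : ℝ) ≤ j * φ N := le_mul_of_one_le_left (by linarith) hj'
      linarith
    calc X / 2 * N ≤ j * φ N * N := by gcongr
      _ = (N * j : ℕ) * φ N := by push_cast; ring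

theorem exists_totient_le_and_mul_log_log_le {X : ℝ} (hX : 1 < X) :
    ∃ k : ℕ, 0 < k ∧ φ k ≤ X ∧ k ≤ X ^ 2 ∧ X / 4 * Real.log (Real.log X) ≤ k := by
  have hlog : 0 < Real.log X := Real.log_pos hX
  set y := ⌊√(Real.log X)⌋₊
  have hy : (y : ℝ) ≤ √(Real.log X) := Nat.floor_le (Real.sqrt_nonneg _)
  have hy_fac : (y ! : ℝ) ≤ X := (factorial_le_exp_sq y).trans <| by
    rw [← Real.le_log_iff_exp_le (by linarith)]
    exact (Real.le_sqrt (by positivity) hlog.le).1 hy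
  have hy_log : Real.log (Real.log X) / 2 ≤ Real.log (y + 1) := by
    rw [← Real.log_sqrt hlog.le]
    exact Real.log_le_log (Real.sqrt_pos.2 hlog) (Nat.lt_floor_add_one _).le
  obtain ⟨k, hk, hφk, hk_sq, hk_mul⟩ :=
    exists_totient_le_and_mul_le_mul_totient y.factorial_pos hy_fac
  refine ⟨k, hk, hφk, hk_sq, ?_⟩
  have hφ : (0 : ℝ) < φ (y !) := by exact_mod_cast Nat.totient_pos.2 y.factorial_pos
  have hmertens := log_mul_totient_le (Icc_one_subset_divisors_factorial y)
  refine le_of_mul_le_mul_right ?_ hφ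
  calc X / 4 * Real.log (Real.log X) * φ (y !)
      = X / 2 * (Real.log (Real.log X) / 2 * φ (y !)) := by ring
    _ ≤ X / 2 * (Real.log (y + 1) * φ (y !)) := by gcongr
    _ ≤ X / 2 * y ! := by gcongr
    _ ≤ k * φ (y !) := hk_mul

theorem mul_log_log_le_sum_digits_factorial {b n : ℕ} {X : ℝ} (hb : 1 < b) (hX : 1 < X)
    (hn : 2 * X * Real.log (b + 1) ≤ Real.log n) :
    X / 4 * Real.log (Real.log X) ≤ (b.digits n !).sum := by
  obtain ⟨k, hk, hφk, hk_sq, hk_log⟩ := exists_totient_le_and_mul_log_log_le hX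
  have hlogb : 1 ≤ Real.log (b + 1) := by
    rw [Real.le_log_iff_exp_le (by positivity)]
    have : (2 : ℝ) ≤ b := by exact_mod_cast hb
    linarith [Real.exp_one_lt_three]
  have hn0 : (0 : ℝ) < n := by
    refine n.cast_nonneg.lt_of_ne fun h => ?_
    rw [← h, Real.log_zero] at hn
    nlinarith
  have hlogk : Real.log k ≤ X := by
    rw [Real.log_le_iff_le_exp (by positivity)]
    have hexp : X ≤ Real.exp (X / 2) := by linarith [Real.two_mul_le_exp (x := X / 2)]
    calc (k : ℝ) ≤ X ^ 2 := hk_sq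
      _ ≤ Real.exp (X / 2) ^ 2 := by gcongr
      _ = Real.exp X := by rw [← Real.exp_nat_mul]; congr 1; push_cast; ring
  have hkn : (k : ℝ) * (b + 1) ^ φ k ≤ n := by
    rw [← Real.log_le_log_iff (by positivity) hn0, Real.log_mul (by positivity) (by positivity),
      Real.log_pow]
    calc Real.log k + φ k * Real.log (b + 1) ≤ X + X * Real.log (b + 1) := by gcongr
      _ ≤ X * Real.log (b + 1) + X * Real.log (b + 1) := by
          gcongr
          exact le_mul_of_one_le_right (by linarith) hlogb
      _ ≤ Real.log n := by linarith
  exact hk_log.trans (by exact_mod_cast le_sum_digits_factorial hb hk (by exact_mod_cast hkn))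

theorem log_const_mul_isEquivalent_log {c : ℝ} (hc : c ≠ 0) :
    (fun x => Real.log (c * x)) ~[atTop] Real.log := by
  refine Real.isLittleO_const_log_atTop.congr' (f₁ := fun _ => Real.log c) ?_ .rfl
  filter_upwards [eventually_ne_atTop 0] with x hx
  simp [Real.log_mul hc hx]

theorem log_log_const_mul_isEquivalent_log_log {c : ℝ} (hc : c ≠ 0) :
    (fun x => Real.log (Real.log (c * x))) ~[atTop] fun x => Real.log (Real.log x) :=
  (log_const_mul_isEquivalent_log hc).log Real.tendsto_log_atTop

theorem log_mul_log_log_log_isBigO_sum_digits_factorial {b : ℕ} (hb : 1 < b) :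
    (fun n : ℕ => Real.log n * Real.log (Real.log (Real.log n))) =O[atTop]
      fun n => ((b.digits n !).sum : ℝ) := by
  have hlogb : 0 < Real.log (b + 1) := Real.log_pos (by norm_cast; lia)
  set c : ℝ := (2 * Real.log (b + 1))⁻¹ with hc
  have hc0 : 0 < c := by positivity
  have hlog : Tendsto (fun n : ℕ => Real.log n) atTop atTop :=
    Real.tendsto_log_atTop.comp tendsto_natCast_atTop_atTop
  have hX : Tendsto (fun n : ℕ => c * Real.log n) atTop atTop := hlog.const_mul_atTop hc0
  calc (fun n : ℕ => Real.log n * Real.log (Real.log (Real.log n)))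
      =O[atTop] fun n : ℕ => c * Real.log n * Real.log (Real.log (c * Real.log n)) :=
        (isBigO_self_const_mul hc0.ne' _ _).mul
          ((log_log_const_mul_isEquivalent_log_log hc0.ne').isBigO_symm.comp_tendsto hlog)
    _ =O[atTop] fun n => ((b.digits n !).sum : ℝ) := by
      refine IsBigO.of_bound 4 ?_
      filter_upwards [hX.eventually_gt_atTop 1,
        (Real.tendsto_log_atTop.comp hX).eventually_ge_atTop 1] with n hn hn'
      have hbound := mul_log_log_le_sum_digits_factorial (n := n) hb hn
        (by rw [hc]; field_simp; rfl)
      have hloglog := Real.log_nonneg hn'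
      rw [Real.norm_of_nonneg (by positivity), Real.norm_natCast]
      linarith

/-- For each integer `b ≥ 2` there is a constant `C > 0` (depending only on `b`)
such that `s_b(n!) > C * log n * log log log n` for every integer `n ≥ 3`. -/
theorem sum_digits_factorial_gt (b : ℕ) (hb : 2 ≤ b) :
    ∃ C : ℝ, 0 < C ∧ ∀ n : ℕ, 3 ≤ n →
      C * Real.log n * Real.log (Real.log (Real.log n)) <
        ((Nat.digits b (Nat.factorial n)).sum : ℝ) := by
  obtain ⟨C, hC, hbound⟩ :=
    bound_of_isBigO_nat_atTop (log_mul_log_log_log_isBigO_sum_digits_factorial hb)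
  refine ⟨(2 * C)⁻¹, by positivity, fun n _ => ?_⟩
  have hsum : (0 : ℝ) < (b.digits n !).sum := by
    exact_mod_cast sum_digits_pos n.factorial_ne_zero
  have hle : Real.log n * Real.log (Real.log (Real.log n)) ≤ C * (b.digits n !).sum := by
    simpa only [Real.norm_natCast] using (le_abs_self _).trans (hbound hsum.ne')
  rw [mul_assoc, inv_mul_lt_iff₀ (by positivity)]
  linarith [mul_pos hC hsum]
end

section
/- For each real x ≥ 1, let m(x) be the greatest positive integer m such that φ(m) ≤ x, where φ is Euler's totient function. Then m(x) is asymptotically equivalent to e^γ · x · log log x as x → +∞, i.e., m(x) / (x · log log x) tends to e^γ as x → +∞, where γ is the Euler–Mascheroni constant. -/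
/-!
By the product formula, `n / φ n = ∏ p ∣ n, (1 - 1 / p)⁻¹`. The prime factors of `n` exceeding
`log n` number at most `log n / log log n`, so they change this product only by a factor
`1 + o(1)`, and Mertens' third theorem `∏ p ≤ y, (1 - 1 / p)⁻¹ ∼ e^γ log y` at `y = log n` yields
Landau's bound `n ≤ (e^γ + o(1)) φ n log log n`. Conversely, for `q` the product of the primes up
to `log x / log 4`, which is at most `x`, the multiple `m = q ⌊x / φ q⌋` satisfies `φ m ≤ x` and
comes within `q` of `x * (q / φ q)`, which is `∼ e^γ x log log x`.

For Mertens' third theorem, the sum of `p ^ (-(1 + δ))` over primes is cut into the blocks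
`(e^k, e^(k+1)]`. By Mertens' first theorem and Abel summation it is compared there, uniformly in
`δ ≥ 0`, with `∑ e^(-δ k) / k`, whose full sum is `-log (1 - e^(-δ))`. The constant is then
identified by letting `δ → 0+`: `log ζ(1 + δ) + log (1 - e^(-δ)) → 0`, while at `δ = 0` the
comparison series is harmonic and contributes `γ`.
-/

namespace TotientMertens

open Finset Real Filter Topology
open ArithmeticFunction hiding log

section MertensFirst

lemma log_factorial_eq_sum_vonMangoldt_mul_div (N : ℕ) :
    log (N.factorial : ℝ) = ∑ n ∈ range (N + 1), vonMangoldt n * ((N / n : ℕ) : ℝ) := by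
  have h_range : ∑ n ∈ range (N + 1), vonMangoldt n * ((N / n : ℕ) : ℝ) =
      ∑ n ∈ Ioc 0 N, vonMangoldt n * ((N / n : ℕ) : ℝ) := by
    rw [Nat.range_succ_eq_Icc_zero, ← sum_Ioc_add_eq_sum_Icc N.zero_le]
    simp
  rw [h_range, ← sum_Ioc_mul_zeta_eq_sum, vonMangoldt_mul_zeta]
  clear h_range
  induction N with
  | zero => simp
  | succ k ih =>
    rw [sum_Ioc_succ_top k.zero_le, ← ih, Nat.factorial_succ, Nat.cast_mul,
      Real.log_mul (by positivity) (by positivity), ArithmeticFunction.log_apply, add_comm]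

lemma mul_log_sub_le_log_factorial (N : ℕ) : N * log N - N ≤ log (N.factorial : ℝ) := by
  rcases N.eq_zero_or_pos with rfl | hN
  · simp
  have h := log_le_log (by positivity) (pow_div_factorial_le_exp (N : ℝ) N.cast_nonneg N)
  rw [log_div (by positivity) (by positivity), log_pow, log_exp] at h
  linarith

lemma log_factorial_le_mul_log (N : ℕ) : log (N.factorial : ℝ) ≤ N * log N := by
  rw [← log_pow]
  exact log_le_log (by positivity) (mod_cast N.factorial_le_pow)

lemma abs_sum_vonMangoldt_div_sub_log_le {N : ℕ} (hN : 1 ≤ N) :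
    |∑ n ∈ range (N + 1), vonMangoldt n / n - log N| ≤ log 4 + 4 := by
  have hN_pos : (0 : ℝ) < N := mod_cast hN
  have h_psi : ∑ n ∈ range (N + 1), vonMangoldt n ≤ (log 4 + 4) * N := by
    simpa [Chebyshev.psi_eq_sum_Icc, Nat.range_succ_eq_Icc_zero] using
      Chebyshev.psi_le_const_mul_self hN_pos.le
  have h_upper : log (N.factorial : ℝ) ≤ N * ∑ n ∈ range (N + 1), vonMangoldt n / n := by
    rw [log_factorial_eq_sum_vonMangoldt_mul_div, mul_sum]
    refine sum_le_sum fun n _ => ?_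
    calc vonMangoldt n * ((N / n : ℕ) : ℝ) ≤ vonMangoldt n * ((N : ℝ) / n) :=
          mul_le_mul_of_nonneg_left Nat.cast_div_le vonMangoldt_nonneg
      _ = N * (vonMangoldt n / n) := by ring
  have h_lower : N * ∑ n ∈ range (N + 1), vonMangoldt n / n -
      ∑ n ∈ range (N + 1), vonMangoldt n ≤ log (N.factorial : ℝ) := by
    rw [log_factorial_eq_sum_vonMangoldt_mul_div, mul_sum, ← sum_sub_distrib]
    refine sum_le_sum fun n _ => ?_
    have h_floor : (N : ℝ) / n - 1 ≤ ((N / n : ℕ) : ℝ) := by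
      rw [← Nat.floor_div_eq_div (K := ℝ)]
      exact (Nat.sub_one_lt_floor _).le
    calc N * (vonMangoldt n / n) - vonMangoldt n = vonMangoldt n * ((N : ℝ) / n - 1) := by ring
      _ ≤ vonMangoldt n * ((N / n : ℕ) : ℝ) :=
          mul_le_mul_of_nonneg_left h_floor vonMangoldt_nonneg
  have h_fact_le := log_factorial_le_mul_log N
  have le_h_fact := mul_log_sub_le_log_factorial N
  have h_log4 : 0 ≤ log 4 := log_nonneg (by norm_num)
  rw [abs_le]
  constructor <;> refine le_of_mul_le_mul_left ?_ hN_pos <;> nlinarith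

/-- The weight `log p / p` of a prime `p` in Mertens' first theorem, extended by zero to all of
`ℕ` so that sums over primes are sums over intervals. -/
noncomputable def primeLogWeight (n : ℕ) : ℝ := if n.Prime then log n / n else 0

lemma primeLogWeight_nonneg (n : ℕ) : 0 ≤ primeLogWeight n := by
  unfold primeLogWeight
  split_ifs <;> positivity

lemma summable_vonMangoldt_div_of_not_prime :
    Summable fun n : ℕ => (if n.Prime then 0 else vonMangoldt n) / n := by
  refine (vonMangoldt.summable_residueClass_non_primes_div (0 : ZMod 1)).congr fun n => ?_
  simp [vonMangoldt.residueClass, Subsingleton.elim (n : ZMod 1) 0]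

theorem exists_abs_sum_primeLogWeight_sub_log_le :
    ∃ C, ∀ N : ℕ, 1 ≤ N → |∑ n ∈ range (N + 1), primeLogWeight n - log N| ≤ C := by
  set r : ℕ → ℝ := fun n => (if n.Prime then 0 else vonMangoldt n) / n
  have hr_nonneg (n : ℕ) : 0 ≤ r n := by
    simp only [r]
    split_ifs <;> positivity
  refine ⟨log 4 + 4 + ∑' n, r n, fun N hN => ?_⟩
  have h_split : ∑ n ∈ range (N + 1), vonMangoldt n / n =
      ∑ n ∈ range (N + 1), primeLogWeight n + ∑ n ∈ range (N + 1), r n := by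
    rw [← sum_add_distrib]
    refine sum_congr rfl fun n _ => ?_
    by_cases hn : n.Prime <;> simp [r, primeLogWeight, hn, vonMangoldt_apply_prime]
  have hr_le := summable_vonMangoldt_div_of_not_prime.sum_le_tsum (range (N + 1))
    fun n _ => hr_nonneg n
  have hr_sum : 0 ≤ ∑ n ∈ range (N + 1), r n := sum_nonneg fun n _ => hr_nonneg n
  have h_mangoldt := abs_le.1 (abs_sum_vonMangoldt_div_sub_log_le hN)
  rw [abs_le]
  constructor <;> linarith

lemma abs_log_floor_sub_log_le_one {x : ℝ} (hx : 1 ≤ x) : |log ⌊x⌋₊ - log x| ≤ 1 := by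
  have h_floor : (1 : ℝ) ≤ ⌊x⌋₊ := mod_cast Nat.floor_pos.2 hx
  have h_le : log ⌊x⌋₊ ≤ log x := log_le_log (by positivity) (Nat.floor_le (by positivity))
  have h_div : log x - log ⌊x⌋₊ ≤ 1 := by
    rw [← log_div (by positivity) (by positivity)]
    refine (log_le_sub_one_of_pos (by positivity)).trans ?_
    rw [sub_le_iff_le_add, div_le_iff₀ (by positivity)]
    linarith [Nat.lt_floor_add_one x]
  rw [abs_le]
  constructor <;> linarith

theorem exists_abs_sum_floor_primeLogWeight_sub_log_le :
    ∃ C, ∀ x : ℝ, 1 ≤ x → |∑ n ∈ range (⌊x⌋₊ + 1), primeLogWeight n - log x| ≤ C := by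
  obtain ⟨C, hC⟩ := exists_abs_sum_primeLogWeight_sub_log_le
  refine ⟨C + 1, fun x hx => ?_⟩
  exact (abs_sub_le _ _ _).trans
    (add_le_add (hC _ (Nat.floor_pos.2 hx)) (abs_log_floor_sub_log_le_one hx))

end MertensFirst

section ExpBlocks

lemma abs_sum_Ico_mul_le_of_antitoneOn {g f : ℕ → ℝ} {T K : ℕ} {B : ℝ}
    (hf : AntitoneOn f (Set.Ici T)) (hf_nonneg : ∀ k, T ≤ k → 0 ≤ f k)
    (hg : ∀ K, T ≤ K → |∑ k ∈ Ico T K, g k| ≤ B) (hTK : T ≤ K) :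
    |∑ k ∈ Ico T K, g k * f k| ≤ B * f T := by
  have h_abel : |∑ k ∈ Ico T K, g k * f k - (∑ k ∈ Ico T K, g k) * f K| ≤ B * (f T - f K) := by
    induction K, hTK using Nat.le_induction with
    | base => simp
    | succ K hTK ih =>
      have h_anti : 0 ≤ f K - f (K + 1) :=
        sub_nonneg.2 (hf hTK (Set.mem_Ici.2 (by omega)) K.le_succ)
      have h_step := mul_le_mul_of_nonneg_right (hg (K + 1) (by omega)) h_anti
      rw [sum_Ico_succ_top hTK (fun k => g k * f k)]
      calc _ = |(∑ k ∈ Ico T K, g k * f k - (∑ k ∈ Ico T K, g k) * f K) +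
              (∑ k ∈ Ico T (K + 1), g k) * (f K - f (K + 1))| := by
            rw [sum_Ico_succ_top hTK g]
            ring_nf
        _ ≤ B * (f T - f K) + B * (f K - f (K + 1)) := by
            refine (abs_add_le _ _).trans (add_le_add ih ?_)
            rwa [abs_mul, abs_of_nonneg h_anti]
        _ = B * (f T - f (K + 1)) := by ring
  have h_last : |(∑ k ∈ Ico T K, g k) * f K| ≤ B * f K := by
    rw [abs_mul, abs_of_nonneg (hf_nonneg K hTK)]
    exact mul_le_mul_of_nonneg_right (hg K hTK) (hf_nonneg K hTK)
  have h_triangle := abs_le.1 h_abel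
  have h_last := abs_le.1 h_last
  rw [abs_le]
  constructor <;> linarith

/-- The least natural number exceeding `exp k`, so that `Finset.range (expCut k)` consists of the
`n ≤ exp k`. -/
noncomputable def expCut (k : ℕ) : ℕ := ⌊exp k⌋₊ + 1

lemma lt_expCut_iff {n k : ℕ} : n < expCut k ↔ (n : ℝ) ≤ exp k := by
  rw [expCut, Nat.lt_succ_iff, Nat.le_floor_iff (exp_pos _).le]

lemma expCut_le_iff {n k : ℕ} : expCut k ≤ n ↔ exp k < n := by
  rw [← not_lt, lt_expCut_iff, not_le]

lemma monotone_expCut : Monotone expCut := fun a b hab => by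
  unfold expCut
  gcongr

lemma lt_expCut_self (k : ℕ) : k < expCut k :=
  lt_expCut_iff.2 (by linarith [add_one_le_exp (k : ℝ)])

lemma log_mem_Icc_of_mem_Ico_expCut {n k : ℕ} (hn : n ∈ Ico (expCut k) (expCut (k + 1))) :
    log n ∈ Set.Icc (k : ℝ) (k + 1 : ℕ) := by
  obtain ⟨h_lower, h_upper⟩ := mem_Ico.1 hn
  have h_exp := expCut_le_iff.1 h_lower
  have hn_pos : (0 : ℝ) < n := (exp_pos _).trans h_exp
  exact ⟨((lt_log_iff_exp_lt hn_pos).2 h_exp).le,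
    (log_le_iff_le_exp hn_pos).2 (lt_expCut_iff.1 h_upper)⟩

lemma sum_Ico_expCut_eq_sum_blocks (F : ℕ → ℝ) {T K : ℕ} (hTK : T ≤ K) :
    ∑ n ∈ Ico (expCut T) (expCut K), F n =
      ∑ k ∈ Ico T K, ∑ n ∈ Ico (expCut k) (expCut (k + 1)), F n := by
  induction K, hTK using Nat.le_induction with
  | base => simp
  | succ K hTK ih =>
    rw [sum_Ico_succ_top hTK, ← ih,
      sum_Ico_consecutive F (monotone_expCut hTK) (monotone_expCut K.le_succ)]

variable {a : ℕ → ℝ} {C : ℝ}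

lemma abs_sum_blocks_sub_one_le (ha : ∀ k : ℕ, |∑ n ∈ range (expCut k), a n - k| ≤ C) {T K : ℕ}
    (hTK : T ≤ K) :
    |∑ k ∈ Ico T K, (∑ n ∈ Ico (expCut k) (expCut (k + 1)), a n - 1)| ≤ 2 * C := by
  rw [sum_sub_distrib, ← sum_Ico_expCut_eq_sum_blocks a hTK,
    sum_Ico_eq_sub a (monotone_expCut hTK)]
  calc _ = |(∑ n ∈ range (expCut K), a n - K) - (∑ n ∈ range (expCut T), a n - T)| := by
        simp only [sum_const, Nat.card_Ico, nsmul_eq_mul, Nat.cast_sub hTK]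
        ring_nf
    _ ≤ C + C := (abs_sub _ _).trans (add_le_add (ha K) (ha T))
    _ = 2 * C := by ring

lemma sum_mul_comp_log_mem_Icc (ha_nonneg : ∀ n, 0 ≤ a n) {f : ℝ → ℝ} {T K : ℕ}
    (hf : AntitoneOn f (Set.Ici T)) (hTK : T ≤ K) :
    ∑ n ∈ Ico (expCut T) (expCut K), a n * f (log n) ∈ Set.Icc
      (∑ k ∈ Ico T K, (∑ n ∈ Ico (expCut k) (expCut (k + 1)), a n) * f (k + 1 : ℕ))
      (∑ k ∈ Ico T K, (∑ n ∈ Ico (expCut k) (expCut (k + 1)), a n) * f k) := by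
  have h_mem {k l : ℕ} (hk : k ∈ Ico T K) (hl : k ≤ l) : (l : ℝ) ∈ Set.Ici (T : ℝ) :=
    Set.mem_Ici.2 (mod_cast (mem_Ico.1 hk).1.trans hl)
  have h_log_mem {k : ℕ} (hk : k ∈ Ico T K) {n : ℕ}
      (hn : n ∈ Ico (expCut k) (expCut (k + 1))) : log n ∈ Set.Ici (T : ℝ) :=
    (h_mem hk le_rfl).trans (log_mem_Icc_of_mem_Ico_expCut hn).1
  rw [sum_Ico_expCut_eq_sum_blocks _ hTK]
  constructor <;> refine sum_le_sum fun k hk => ?_ <;> rw [sum_mul] <;>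
    refine sum_le_sum fun n hn => mul_le_mul_of_nonneg_left ?_ (ha_nonneg n)
  · exact hf (h_log_mem hk hn) (h_mem hk k.le_succ) (log_mem_Icc_of_mem_Ico_expCut hn).2
  · exact hf (h_mem hk le_rfl) (h_log_mem hk hn) (log_mem_Icc_of_mem_Ico_expCut hn).1

/-- On each block `exp k < n ≤ exp (k + 1)` the values `f (log n)` lie between `f (k + 1)` and
`f k`, and `a` has total mass `1` up to a term with bounded partial sums. -/
theorem abs_sum_mul_comp_log_sub_sum_le (ha_nonneg : ∀ n, 0 ≤ a n)
    (ha : ∀ k : ℕ, |∑ n ∈ range (expCut k), a n - k| ≤ C) {f : ℝ → ℝ} {T K : ℕ}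
    (hf : AntitoneOn f (Set.Ici T)) (hf_nonneg : ∀ x : ℝ, T ≤ x → 0 ≤ f x) (hTK : T ≤ K) :
    |∑ n ∈ Ico (expCut T) (expCut K), a n * f (log n) - ∑ k ∈ Ico T K, f (k + 1 : ℕ)| ≤
      (2 * C + 1) * f T := by
  have hC_nonneg : 0 ≤ C := (abs_nonneg _).trans (ha 0)
  have h_mem {k l : ℕ} (hk : T ≤ k) (hl : k ≤ l) : (l : ℝ) ∈ Set.Ici (T : ℝ) :=
    Set.mem_Ici.2 (mod_cast hk.trans hl)
  have hf_next : 2 * C * f (T + 1 : ℕ) ≤ 2 * C * f T := mul_le_mul_of_nonneg_left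
    (hf (h_mem le_rfl le_rfl) (h_mem le_rfl T.le_succ) (mod_cast T.le_succ)) (by positivity)
  obtain ⟨h_lower, h_upper⟩ := sum_mul_comp_log_mem_Icc ha_nonneg hf hTK
  have h_abel := abs_le.1 <| abs_sum_Ico_mul_le_of_antitoneOn (f := fun k : ℕ => f k)
    (fun k hk l hl hkl => hf (h_mem hk le_rfl) (h_mem hl le_rfl) (mod_cast hkl))
    (fun k hk => hf_nonneg k (mod_cast hk)) (fun _ => abs_sum_blocks_sub_one_le ha) hTK
  have h_abel_next := abs_le.1 <| abs_sum_Ico_mul_le_of_antitoneOn (f := fun k => f (k + 1 : ℕ))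
    (fun k hk l hl hkl => hf (h_mem hk k.le_succ) (h_mem hl l.le_succ) (mod_cast by omega))
    (fun k hk => hf_nonneg _ (h_mem hk k.le_succ)) (fun _ => abs_sum_blocks_sub_one_le ha) hTK
  have h_telescope : ∑ k ∈ Ico T K, f (k + 1 : ℕ) - ∑ k ∈ Ico T K, f k = f K - f T := by
    rw [← sum_sub_distrib]
    exact sum_Ico_sub (fun k : ℕ => f k) hTK
  have hfT := hf_nonneg T le_rfl
  have hfK := hf_nonneg K (mod_cast hTK)
  simp only [sub_mul, one_mul, sum_sub_distrib] at h_abel h_abel_next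
  rw [abs_le]
  constructor <;> linarith

end ExpBlocks

section EulerFactors

lemma neg_log_one_sub_mem_Icc {x : ℝ} (hx : x ≤ 1 / 2) :
    -log (1 - x) ∈ Set.Icc x (x + 2 * x ^ 2) := by
  have h_pos : 0 < 1 - x := by linarith
  refine ⟨by linarith [log_le_sub_one_of_pos h_pos], ?_⟩
  have h_inv : (1 - x)⁻¹ ≤ 1 + x + 2 * x ^ 2 := by
    rw [inv_le_iff_one_le_mul₀ h_pos]
    nlinarith [mul_nonneg (sq_nonneg x) (by linarith : 0 ≤ 1 - 2 * x)]
  linarith [one_sub_inv_le_log_of_pos h_pos]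

/-- The logarithm `-log (1 - p ^ (-s))` of the Euler factor of the zeta function at a prime `p`,
extended by zero to all of `ℕ` so that sums over primes are sums over intervals. -/
noncomputable def logEulerFactor (s : ℝ) (n : ℕ) : ℝ :=
  if n.Prime then -log (1 - (n : ℝ) ^ (-s)) else 0

variable {p : ℕ} {s : ℝ}

lemma rpow_neg_le_inv {n : ℕ} (hn : 1 ≤ n) (hs : 1 ≤ s) : (n : ℝ) ^ (-s) ≤ (n : ℝ)⁻¹ := by
  rw [← rpow_neg_one]
  exact rpow_le_rpow_of_exponent_le (mod_cast hn) (by linarith)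

lemma rpow_neg_le_half (hp : p.Prime) (hs : 1 ≤ s) : (p : ℝ) ^ (-s) ≤ 1 / 2 := by
  refine (rpow_neg_le_inv hp.one_le hs).trans ?_
  rw [one_div]
  exact inv_anti₀ two_pos (mod_cast hp.two_le)

lemma logEulerFactor_mem_Icc (hp : p.Prime) (hs : 1 ≤ s) :
    logEulerFactor s p ∈ Set.Icc ((p : ℝ) ^ (-s)) ((p : ℝ) ^ (-s) + 2 * ((p : ℝ) ^ 2)⁻¹) := by
  rw [logEulerFactor, if_pos hp]
  obtain ⟨h_lower, h_upper⟩ := neg_log_one_sub_mem_Icc (rpow_neg_le_half hp hs)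
  refine ⟨h_lower, h_upper.trans ?_⟩
  rw [← inv_pow]
  gcongr
  exact rpow_neg_le_inv hp.one_le hs

lemma logEulerFactor_nonneg (hs : 1 ≤ s) (n : ℕ) : 0 ≤ logEulerFactor s n := by
  by_cases hn : n.Prime
  · exact le_trans (by positivity) (logEulerFactor_mem_Icc hn hs).1
  · simp [logEulerFactor, hn]

lemma logEulerFactor_one_le_two_div (n : ℕ) : logEulerFactor 1 n ≤ 2 / n := by
  by_cases hn : n.Prime
  · have h_nonneg : 0 ≤ (n : ℝ) ^ (-1 : ℝ) := by positivity
    have h_half := rpow_neg_le_half hn le_rfl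
    have h_bound := (neg_log_one_sub_mem_Icc h_half).2
    rw [logEulerFactor, if_pos hn]
    rw [rpow_neg_one] at h_nonneg h_half h_bound ⊢
    rw [div_eq_mul_inv]
    nlinarith
  · rw [logEulerFactor, if_neg hn]
    positivity

lemma hasProd_inv_one_sub_rpow_neg (hs : 1 < s) :
    HasProd (fun p : Nat.Primes => (1 - (p : ℝ) ^ (-s))⁻¹) (∑' n : ℕ, 1 / (n : ℝ) ^ s) := by
  let powHom : ℕ →*₀ ℝ :=
    { toFun n := (n : ℝ) ^ (-s)
      map_zero' := by simp [zero_rpow (by linarith : -s ≠ 0)]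
      map_one' := by simp
      map_mul' m n := by
        push_cast
        exact mul_rpow m.cast_nonneg n.cast_nonneg }
  have h_summable : Summable fun n => powHom n := summable_nat_rpow.2 (by linarith)
  have h_tsum : ∑' n : ℕ, 1 / (n : ℝ) ^ s = ∑' n, powHom n :=
    tsum_congr fun n => by
      rw [one_div, ← rpow_neg n.cast_nonneg]
      rfl
  rw [h_tsum]
  exact EulerProduct.eulerProduct_completely_multiplicative_hasProd h_summable.norm

lemma tsum_one_div_nat_rpow_pos (hs : 1 < s) : 0 < ∑' n : ℕ, 1 / (n : ℝ) ^ s :=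
  (summable_one_div_nat_rpow.2 hs).tsum_pos (fun n => by positivity) 1 (by simp)

theorem hasSum_logEulerFactor (hs : 1 < s) :
    HasSum (logEulerFactor s) (log (∑' n : ℕ, 1 / (n : ℝ) ^ s)) := by
  have h_support : Function.support (logEulerFactor s) ⊆ {p | p.Prime} := fun n hn => by
    by_contra h_not_prime
    exact hn (if_neg h_not_prime)
  have h_term (p : Nat.Primes) : log (1 - (p : ℝ) ^ (-s))⁻¹ = logEulerFactor s p := by
    rw [log_inv, logEulerFactor, if_pos p.2]
  have h_pos (p : Nat.Primes) : 0 < 1 - (p : ℝ) ^ (-s) := by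
    linarith [rpow_neg_le_half p.2 hs.le]
  have h_primes : HasSum (fun p : Nat.Primes => logEulerFactor s p)
      (log (∑' n : ℕ, 1 / (n : ℝ) ^ s)) := by
    refine ((continuousAt_log (tsum_one_div_nat_rpow_pos hs).ne').tendsto.comp
      (hasProd_inv_one_sub_rpow_neg hs)).congr fun S => ?_
    rw [Function.comp_apply, log_prod fun p _ => (inv_pos.2 (h_pos p)).ne']
    exact sum_congr rfl fun p _ => h_term p
  exact (hasSum_subtype_iff_of_support_subset h_support).1 h_primes

lemma tendsto_logEulerFactor_one_add (n : ℕ) :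
    Tendsto (fun δ : ℝ => logEulerFactor (1 + δ) n) (𝓝 0) (𝓝 (logEulerFactor 1 n)) := by
  unfold logEulerFactor
  split_ifs with hn
  · have h_ne : 1 - (n : ℝ) ^ (-1 : ℝ) ≠ 0 := by linarith [rpow_neg_le_half hn le_rfl]
    have h_exponent : Tendsto (fun δ : ℝ => -(1 + δ)) (𝓝 0) (𝓝 (-1)) :=
      (by fun_prop : Continuous fun δ : ℝ => -(1 + δ)).tendsto' 0 (-1) (by simp)
    exact (((tendsto_const_nhds.rpow h_exponent
      (Or.inl (mod_cast hn.ne_zero))).const_sub 1).log h_ne).neg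
  · exact tendsto_const_nhds

end EulerFactors

section MertensThird

/-- The logarithm of the Euler product over the primes `p ≤ exp T` at `1 + δ`, minus the `T`-th
partial sum of the series `∑ exp (-δ * k) / k = -log (1 - exp (-δ))`. -/
noncomputable def mertensDefect (δ : ℝ) (T : ℕ) : ℝ :=
  ∑ n ∈ range (expCut T), logEulerFactor (1 + δ) n -
    ∑ k ∈ range T, exp (-δ * (k + 1 : ℕ)) / (k + 1 : ℕ)

variable {δ : ℝ}

lemma primeLogWeight_mul_exp_div_log {p : ℕ} (hp : p.Prime) (δ : ℝ) :
    primeLogWeight p * (exp (-δ * log p) / log p) = (p : ℝ) ^ (-(1 + δ)) := by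
  have hp_pos : (0 : ℝ) < p := mod_cast hp.pos
  have h_log : 0 < log (p : ℝ) := log_pos (mod_cast hp.one_lt)
  rw [primeLogWeight, if_pos hp, neg_add, rpow_add hp_pos, rpow_neg_one,
    rpow_def_of_pos hp_pos (-δ), mul_comm (log (p : ℝ)) (-δ)]
  field_simp

lemma logEulerFactor_one_add_mem_Icc (hδ : 0 ≤ δ) (n : ℕ) :
    logEulerFactor (1 + δ) n ∈ Set.Icc (primeLogWeight n * (exp (-δ * log n) / log n))
      (primeLogWeight n * (exp (-δ * log n) / log n) + 2 * ((n : ℝ) ^ 2)⁻¹) := by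
  by_cases hn : n.Prime
  · rw [primeLogWeight_mul_exp_div_log hn]
    exact logEulerFactor_mem_Icc hn (by linarith)
  · simp [logEulerFactor, primeLogWeight, hn]

lemma antitoneOn_exp_neg_mul_div (hδ : 0 ≤ δ) :
    AntitoneOn (fun u => exp (-δ * u) / u) (Set.Ioi 0) := fun u hu v _ huv => by
  have hu_pos : 0 < u := hu
  have h_exp : exp (-δ * v) ≤ exp (-δ * u) := exp_le_exp.2 (by nlinarith)
  exact div_le_div₀ (exp_pos _).le h_exp hu_pos huv

lemma sum_Ico_expCut_inv_sq_le {T : ℕ} (hT : 1 ≤ T) (N : ℕ) :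
    ∑ n ∈ Ico (expCut T) N, ((n : ℝ) ^ 2)⁻¹ ≤ 2 / T := by
  have hT_pos : (0 : ℝ) < T := mod_cast hT
  calc ∑ n ∈ Ico (expCut T) N, ((n : ℝ) ^ 2)⁻¹ ≤ ∑ n ∈ Ioo T N, ((n : ℝ) ^ 2)⁻¹ := by
        refine sum_le_sum_of_subset_of_nonneg (fun n hn => ?_) fun n _ _ => by positivity
        rw [mem_Ico] at hn
        exact mem_Ioo.2 ⟨(lt_expCut_self T).trans_le hn.1, hn.2⟩
    _ ≤ 2 / (T + 1) := sum_Ioo_inv_sq_le T N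
    _ ≤ 2 / T := div_le_div_of_nonneg_left two_pos.le hT_pos (by linarith)

lemma exists_abs_sum_range_expCut_primeLogWeight_sub_le :
    ∃ C, ∀ k : ℕ, |∑ n ∈ range (expCut k), primeLogWeight n - k| ≤ C := by
  obtain ⟨C, hC⟩ := exists_abs_sum_floor_primeLogWeight_sub_log_le
  exact ⟨C, fun k => by simpa [expCut] using hC (exp k) (one_le_exp k.cast_nonneg)⟩

lemma mertensDefect_sub_mertensDefect (δ : ℝ) {T K : ℕ} (hTK : T ≤ K) :
    mertensDefect δ K - mertensDefect δ T =
      ∑ n ∈ Ico (expCut T) (expCut K), logEulerFactor (1 + δ) n -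
        ∑ k ∈ Ico T K, exp (-δ * (k + 1 : ℕ)) / (k + 1 : ℕ) := by
  rw [sum_Ico_eq_sub _ (monotone_expCut hTK), sum_Ico_eq_sub _ hTK]
  unfold mertensDefect
  ring

theorem exists_abs_mertensDefect_sub_le :
    ∃ C, ∀ δ : ℝ, 0 ≤ δ → ∀ T K : ℕ, 1 ≤ T → T ≤ K →
      |mertensDefect δ K - mertensDefect δ T| ≤ C / T := by
  obtain ⟨C, hC⟩ := exists_abs_sum_range_expCut_primeLogWeight_sub_le
  have hC_nonneg : 0 ≤ C := (abs_nonneg _).trans (hC 0)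
  refine ⟨2 * C + 5, fun δ hδ T K hT hTK => ?_⟩
  have hT_pos : (0 : ℝ) < T := mod_cast hT
  have h_blocks := abs_sum_mul_comp_log_sub_sum_le primeLogWeight_nonneg hC
    ((antitoneOn_exp_neg_mul_div hδ).mono fun x hx => hT_pos.trans_le hx)
    (fun x hx => div_nonneg (exp_pos _).le (hT_pos.le.trans hx)) hTK
  have h_edge : exp (-δ * T) / T ≤ 1 / T := by
    gcongr
    exact exp_le_one_iff.2 (by nlinarith)
  have h_lower := sum_le_sum fun n (_ : n ∈ Ico (expCut T) (expCut K)) =>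
    (logEulerFactor_one_add_mem_Icc hδ n).1
  have h_upper := sum_le_sum fun n (_ : n ∈ Ico (expCut T) (expCut K)) =>
    (logEulerFactor_one_add_mem_Icc hδ n).2
  have h_sq := sum_Ico_expCut_inv_sq_le hT (expCut K)
  have h_sq_nonneg : 0 ≤ 2 / (T : ℝ) := by positivity
  rw [sum_add_distrib, ← mul_sum] at h_upper
  rw [abs_le] at h_blocks
  calc |mertensDefect δ K - mertensDefect δ T|
      ≤ (2 * C + 1) * (exp (-δ * T) / T) + 2 * (2 / T) := by
        rw [mertensDefect_sub_mertensDefect δ hTK, abs_le]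
        constructor <;> linarith [h_blocks.1, h_blocks.2]
    _ ≤ (2 * C + 1) * (1 / T) + 2 * (2 / T) := by gcongr
    _ = (2 * C + 5) / T := by ring

lemma tendsto_expCut_atTop : Tendsto expCut atTop atTop :=
  tendsto_atTop_mono (fun k => (lt_expCut_self k).le) tendsto_id

lemma tendsto_mertensDefect_atTop (hδ : 0 < δ) :
    Tendsto (mertensDefect δ) atTop
      (𝓝 (log (∑' n : ℕ, 1 / (n : ℝ) ^ (1 + δ)) + log (1 - exp (-δ)))) := by
  have h_exp_lt : |exp (-δ)| < 1 := by
    rw [abs_of_pos (exp_pos _)]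
    exact exp_lt_one_iff.2 (by linarith)
  have h_euler := (hasSum_logEulerFactor (by linarith : 1 < 1 + δ)).tendsto_sum_nat.comp
    tendsto_expCut_atTop
  have h_geom := (hasSum_pow_div_log_of_abs_lt_one h_exp_lt).tendsto_sum_nat
  have h_sub := h_euler.sub h_geom
  rw [sub_neg_eq_add] at h_sub
  refine h_sub.congr fun K => ?_
  rw [mertensDefect, Function.comp_apply]
  congr 1
  refine sum_congr rfl fun k _ => ?_
  rw [← exp_nat_mul]
  push_cast
  ring_nf

lemma tendsto_log_tsum_add_log_one_sub_exp_neg :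
    Tendsto (fun δ : ℝ => log (∑' n : ℕ, 1 / (n : ℝ) ^ (1 + δ)) + log (1 - exp (-δ)))
      (𝓝[>] 0) (𝓝 0) := by
  have h_shift : Tendsto (fun δ : ℝ => 1 + δ) (𝓝[>] 0) (𝓝[>] 1) := by
    refine tendsto_nhdsWithin_iff.2 ⟨tendsto_nhdsWithin_of_tendsto_nhds ?_, ?_⟩
    · exact (continuous_const_add 1).tendsto' 0 1 (by simp)
    · exact eventually_mem_nhdsWithin.mono fun δ (hδ : 0 < δ) => lt_add_of_pos_right 1 hδ
  have h_residue := tendsto_sub_mul_tsum_nat_rpow.comp h_shift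
  have h_slope : Tendsto (fun δ : ℝ => (1 - exp (-δ)) / δ) (𝓝[>] 0) (𝓝 1) := by
    have h_deriv : HasDerivAt (fun δ : ℝ => 1 - exp (-δ)) 1 0 := by
      simpa using (hasDerivAt_neg (0 : ℝ)).exp.const_sub 1
    exact h_deriv.tendsto_slope_zero_right.congr fun δ => by simp [div_eq_inv_mul]
  have h_log := (h_residue.mul h_slope).log (by norm_num)
  rw [mul_one, log_one] at h_log
  refine h_log.congr' (eventually_mem_nhdsWithin.mono fun δ (hδ : 0 < δ) => ?_)
  have h_exp : exp (-δ) < 1 := exp_lt_one_iff.2 (by linarith)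
  dsimp only [Function.comp_apply]
  rw [← log_mul (tsum_one_div_nat_rpow_pos (by linarith)).ne' (by linarith)]
  congr 1
  field_simp
  ring

lemma tendsto_mertensDefect_nhds_zero (T : ℕ) :
    Tendsto (fun δ => mertensDefect δ T) (𝓝 0) (𝓝 (mertensDefect 0 T)) := by
  unfold mertensDefect
  refine Tendsto.sub (tendsto_finsetSum _ fun n _ => ?_) (tendsto_finsetSum _ fun k _ => ?_)
  · simpa using tendsto_logEulerFactor_one_add n
  · exact Continuous.tendsto (by fun_prop) 0

theorem tendsto_mertensDefect_zero : Tendsto (mertensDefect 0) atTop (𝓝 0) := by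
  obtain ⟨C, hC⟩ := exists_abs_mertensDefect_sub_le
  refine squeeze_zero_norm' ?_ (tendsto_const_div_atTop_nhds_zero_nat C)
  filter_upwards [eventually_ge_atTop 1] with T hT
  have h_tail {δ : ℝ} (hδ : 0 < δ) :
      |log (∑' n : ℕ, 1 / (n : ℝ) ^ (1 + δ)) + log (1 - exp (-δ)) - mertensDefect δ T| ≤ C / T :=
    le_of_tendsto ((tendsto_mertensDefect_atTop hδ).sub_const _).abs
      ((eventually_ge_atTop T).mono fun K hK => hC δ hδ.le T K hT hK)
  have h_limit := (tendsto_log_tsum_add_log_one_sub_exp_neg.sub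
    (tendsto_nhdsWithin_of_tendsto_nhds (tendsto_mertensDefect_nhds_zero T))).abs
  rw [zero_sub, abs_neg] at h_limit
  exact le_of_tendsto h_limit (eventually_mem_nhdsWithin.mono fun δ hδ => h_tail hδ)

/-- The logarithm of `∏ p ≤ N, (1 - 1 / p)⁻¹`. -/
noncomputable def logMertensProduct (N : ℕ) : ℝ := ∑ n ∈ range (N + 1), logEulerFactor 1 n

lemma monotone_logMertensProduct : Monotone logMertensProduct := fun a b hab =>
  sum_le_sum_of_subset_of_nonneg (range_mono (by omega)) fun n _ _ =>
    logEulerFactor_nonneg le_rfl n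

lemma tendsto_logMertensProduct_floor_exp_sub_log :
    Tendsto (fun T : ℕ => logMertensProduct ⌊exp T⌋₊ - log T) atTop
      (𝓝 eulerMascheroniConstant) := by
  have h_add := tendsto_mertensDefect_zero.add tendsto_harmonic_sub_log
  rw [zero_add] at h_add
  refine h_add.congr fun T => ?_
  simp [mertensDefect, logMertensProduct, expCut, harmonic]

lemma tendsto_sub_log_of_monotone {G : ℝ → ℝ} (hG : Monotone G) {c : ℝ}
    (h_nat : Tendsto (fun n : ℕ => G n - log n) atTop (𝓝 c)) :
    Tendsto (fun z => G z - log z) atTop (𝓝 c) := by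
  have h_lower := (h_nat.sub tendsto_log_nat_add_one_sub_log).comp
    (tendsto_nat_floor_atTop (α := ℝ))
  have h_upper := ((h_nat.comp (tendsto_add_atTop_nat 1)).add tendsto_log_nat_add_one_sub_log).comp
    (tendsto_nat_floor_atTop (α := ℝ))
  rw [sub_zero] at h_lower
  rw [add_zero] at h_upper
  refine tendsto_of_tendsto_of_tendsto_of_le_of_le' h_lower h_upper ?_ ?_ <;>
    filter_upwards [eventually_ge_atTop 1] with z hz <;>
    simp only [Function.comp_apply]
  · have h_log : log z ≤ log (⌊z⌋₊ + 1) :=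
      log_le_log (by positivity) (Nat.lt_floor_add_one z).le
    linarith [hG (Nat.floor_le (by positivity : 0 ≤ z))]
  · have h_floor_pos : (0 : ℝ) < ⌊z⌋₊ := mod_cast Nat.floor_pos.2 hz
    have h_log : log ⌊z⌋₊ ≤ log z := log_le_log h_floor_pos (Nat.floor_le (by positivity))
    have h_mono : G z ≤ G (⌊z⌋₊ + 1 : ℕ) := hG (mod_cast (Nat.lt_floor_add_one z).le)
    push_cast at h_mono ⊢
    linarith

theorem tendsto_exp_logMertensProduct_floor_div_log :
    Tendsto (fun y : ℝ => exp (logMertensProduct ⌊y⌋₊) / log y) atTop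
      (𝓝 (exp eulerMascheroniConstant)) := by
  have h_mono : Monotone fun z : ℝ => logMertensProduct ⌊exp z⌋₊ :=
    monotone_logMertensProduct.comp (Nat.floor_mono.comp exp_monotone)
  have h_log := (tendsto_sub_log_of_monotone h_mono
    tendsto_logMertensProduct_floor_exp_sub_log).comp tendsto_log_atTop
  refine ((continuous_exp.tendsto _).comp h_log).congr' ?_
  filter_upwards [eventually_gt_atTop 1] with y hy
  simp only [Function.comp_apply]
  rw [exp_sub, exp_log (log_pos hy), exp_log (by linarith)]

end MertensThird

section Totient

theorem totient_mul_exp_sum_logEulerFactor (n : ℕ) :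
    (n.totient : ℝ) * exp (∑ p ∈ n.primeFactors, logEulerFactor 1 p) = n := by
  have h_totient : (n.totient : ℝ) = n * ∏ p ∈ n.primeFactors, (1 - (p : ℝ)⁻¹) := by
    simpa using congrArg (Rat.cast : ℚ → ℝ) n.totient_eq_mul_prod_factors
  rw [h_totient, exp_sum, mul_assoc, ← prod_mul_distrib, prod_eq_one, mul_one]
  intro p hp
  have h_prime := Nat.prime_of_mem_primeFactors hp
  have h_half := rpow_neg_le_half h_prime le_rfl
  rw [rpow_neg_one] at h_half
  have h_pos : 0 < 1 - (p : ℝ)⁻¹ := by linarith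
  rw [logEulerFactor, if_pos h_prime, rpow_neg_one, exp_neg, exp_log h_pos,
    mul_inv_cancel₀ h_pos.ne']

lemma card_filter_lt_primeFactors_mul_log_le {n : ℕ} (hn : n ≠ 0) {y : ℝ} (hy : 0 < y) :
    #{p ∈ n.primeFactors | y < (p : ℕ)} * log y ≤ log n :=
  calc _ ≤ ∑ p ∈ n.primeFactors with y < (p : ℕ), log p := by
        rw [← nsmul_eq_mul]
        exact card_nsmul_le_sum _ _ _ fun p hp => log_le_log hy (mem_filter.1 hp).2.le
    _ ≤ ∑ p ∈ n.primeFactors, log p :=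
        sum_le_sum_of_subset_of_nonneg (filter_subset _ _) fun p _ _ => log_natCast_nonneg p
    _ = log (∏ p ∈ n.primeFactors, p : ℕ) := by
        rw [Nat.cast_prod, log_prod fun p hp => Nat.cast_ne_zero.2
          (Nat.prime_of_mem_primeFactors hp).ne_zero]
    _ ≤ log n := by
        refine log_le_log (Nat.cast_pos.2 <| prod_pos fun p hp => Nat.pos_of_mem_primeFactors hp) ?_
        exact_mod_cast Nat.le_of_dvd (Nat.pos_of_ne_zero hn) n.prod_primeFactors_dvd

lemma sum_primeFactors_logEulerFactor_le {n : ℕ} (hn : 1 < log n) :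
    ∑ p ∈ n.primeFactors, logEulerFactor 1 p ≤
      logMertensProduct ⌊log n⌋₊ + 2 / log (log n) := by
  have hn_ne : n ≠ 0 := by
    rintro rfl
    norm_num at hn
  have h_log_pos : 0 < log (n : ℝ) := by linarith
  have h_loglog_pos : 0 < log (log n) := log_pos hn
  rw [← sum_filter_not_add_sum_filter n.primeFactors fun p : ℕ => log n < p]
  refine add_le_add ?_ ?_
  · refine sum_le_sum_of_subset_of_nonneg (fun p hp => ?_) fun p _ _ =>
      logEulerFactor_nonneg le_rfl p
    exact mem_range_succ_iff.2 (Nat.le_floor (not_lt.1 (mem_filter.1 hp).2))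
  · calc ∑ p ∈ n.primeFactors with log n < (p : ℕ), logEulerFactor 1 p
        ≤ #{p ∈ n.primeFactors | log n < (p : ℕ)} * (2 / log n) := by
          rw [← nsmul_eq_mul]
          refine sum_le_card_nsmul _ _ _ fun p hp => (logEulerFactor_one_le_two_div p).trans ?_
          exact div_le_div_of_nonneg_left two_pos.le h_log_pos (mem_filter.1 hp).2.le
      _ ≤ log n / log (log n) * (2 / log n) := by
          gcongr
          rw [le_div_iff₀ h_loglog_pos]
          exact card_filter_lt_primeFactors_mul_log_le hn_ne h_log_pos
      _ = 2 / log (log n) := by field_simp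

lemma tendsto_log_log_atTop : Tendsto (fun x : ℝ => log (log x)) atTop atTop :=
  tendsto_log_atTop.comp tendsto_log_atTop

theorem eventually_le_totient_mul_log_log {c : ℝ} (hc : exp eulerMascheroniConstant < c) :
    ∀ᶠ n : ℕ in atTop, (n : ℝ) ≤ n.totient * (c * log (log n)) := by
  have h_mertens := tendsto_exp_logMertensProduct_floor_div_log.comp tendsto_log_atTop
  have h_error := tendsto_log_log_atTop.const_div_atTop 2
  have h_limit := h_mertens.mul ((continuous_exp.tendsto 0).comp h_error)
  rw [exp_zero, mul_one] at h_limit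
  filter_upwards [tendsto_natCast_atTop_atTop.eventually
    ((h_limit.eventually_le_const hc).and (tendsto_log_atTop.eventually_gt_atTop 1))]
    with n ⟨hn, h_log⟩
  have h_loglog_pos : 0 < log (log n) := log_pos h_log
  calc (n : ℝ) = n.totient * exp (∑ p ∈ n.primeFactors, logEulerFactor 1 p) :=
        (totient_mul_exp_sum_logEulerFactor n).symm
    _ ≤ n.totient * exp (logMertensProduct ⌊log n⌋₊ + 2 / log (log n)) := by
        gcongr
        exact sum_primeFactors_logEulerFactor_le h_log
    _ ≤ n.totient * (c * log (log n)) := by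
        gcongr
        rwa [Function.comp_apply, Function.comp_apply, div_mul_eq_mul_div, ← exp_add,
          div_le_iff₀ h_loglog_pos] at hn

lemma eventually_add_mul_log_log_le {b c : ℝ} (hbc : b < c) (K : ℝ) :
    ∀ᶠ x : ℝ in atTop, K + b * log (log x) ≤ c * log (log x) := by
  filter_upwards [tendsto_log_log_atTop.eventually_ge_atTop (K / (c - b))] with x hx
  rw [div_le_iff₀ (sub_pos.2 hbc)] at hx
  linarith

lemma eventually_mul_log_log_le_sqrt (c : ℝ) : ∀ᶠ x : ℝ in atTop, c * log (log x) ≤ √x := by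
  have h_little : (fun x => log (log x)) =o[atTop] fun x : ℝ => √x := by
    refine (isLittleO_log_id_atTop.comp_tendsto tendsto_log_atTop).trans ?_
    simpa [sqrt_eq_rpow, Function.comp_def] using
      isLittleO_log_rpow_atTop (r := 1 / 2) (by norm_num)
  filter_upwards [(h_little.const_mul_left c).bound one_pos] with x hx
  simpa [abs_of_nonneg (sqrt_nonneg x)] using (le_abs_self _).trans hx

lemma le_sq_of_le_mul_sqrt {m x : ℝ} (hm : 0 < m) (hmx : m ≤ x * √m) : m ≤ x ^ 2 := by
  have h_sqrt_le : √m ≤ x :=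
    le_of_mul_le_mul_right (by rwa [mul_self_sqrt hm.le]) (sqrt_pos.2 hm)
  exact (sqrt_le_left ((sqrt_nonneg m).trans h_sqrt_le)).1 h_sqrt_le

lemma log_log_le_log_two_add_log_log {m x : ℝ} (hm : 1 < m) (hmx : m ≤ x ^ 2) :
    log (log m) ≤ log 2 + log (log x) := by
  have h_log_pos : 0 < log m := log_pos hm
  have h_log_le : log m ≤ 2 * log x := by
    simpa using log_le_log (by positivity) hmx
  rw [← log_mul two_ne_zero (by linarith)]
  exact log_le_log h_log_pos h_log_le

theorem eventually_le_mul_log_log_of_totient_le {c : ℝ} (hc : exp eulerMascheroniConstant < c) :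
    ∀ᶠ x : ℝ in atTop, ∀ m : ℕ, (m.totient : ℝ) ≤ x → m ≤ c * (x * log (log x)) := by
  obtain ⟨b, hb, hbc⟩ := exists_between hc
  have hb_pos : 0 < b := (exp_pos _).trans hb
  obtain ⟨N, hN⟩ := eventually_atTop.1 <| (eventually_le_totient_mul_log_log hb).and <|
    tendsto_natCast_atTop_atTop.eventually (eventually_mul_log_log_le_sqrt b)
  filter_upwards [eventually_ge_atTop (N : ℝ), eventually_gt_atTop 1,
    tendsto_log_atTop.eventually_gt_atTop 1, eventually_add_mul_log_log_le (hb_pos.trans hbc) 1,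
    eventually_add_mul_log_log_le hbc (b * log 2)] with x hxN hx h_log h_one h_slack m hm
  rcases le_or_gt (m : ℝ) x with hmx | hmx
  · nlinarith
  have h_loglog_pos : 0 < log (log m) :=
    log_pos (h_log.trans (log_lt_log (by positivity) hmx))
  obtain ⟨h_landau, h_sqrt⟩ := hN m (mod_cast hxN.trans hmx.le)
  have h_sq : (m : ℝ) ≤ x ^ 2 := by
    refine le_sq_of_le_mul_sqrt (by linarith) (h_landau.trans ?_)
    gcongr
  calc (m : ℝ) ≤ m.totient * (b * log (log m)) := h_landau
    _ ≤ m.totient * (b * (log 2 + log (log x))) := by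
        gcongr
        exact log_log_le_log_two_add_log_log (hx.trans hmx) h_sq
    _ ≤ m.totient * (c * log (log x)) :=
        mul_le_mul_of_nonneg_left (by linarith) (Nat.cast_nonneg _)
    _ ≤ x * (c * log (log x)) := mul_le_mul_of_nonneg_right hm (by linarith)
    _ = c * (x * log (log x)) := by ring

lemma totient_mul_le_totient_mul (a b : ℕ) : (a * b).totient ≤ a.totient * b := by
  rcases eq_or_ne (a * b) 0 with hab | hab
  · simp [hab]
  have h_sum : ∑ p ∈ a.primeFactors, logEulerFactor 1 p ≤
      ∑ p ∈ (a * b).primeFactors, logEulerFactor 1 p :=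
    sum_le_sum_of_subset_of_nonneg (Nat.primeFactors_mono (dvd_mul_right a b) hab)
      fun p _ _ => logEulerFactor_nonneg le_rfl p
  suffices ((a * b).totient : ℝ) ≤ a.totient * b from mod_cast this
  refine le_of_mul_le_mul_right ?_ (exp_pos (∑ p ∈ a.primeFactors, logEulerFactor 1 p))
  calc _ ≤ ((a * b).totient : ℝ) * exp (∑ p ∈ (a * b).primeFactors, logEulerFactor 1 p) := by
        gcongr
    _ = a * b := mod_cast totient_mul_exp_sum_logEulerFactor (a * b)
    _ = a.totient * exp (∑ p ∈ a.primeFactors, logEulerFactor 1 p) * b := by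
        rw [totient_mul_exp_sum_logEulerFactor]
    _ = _ := by ring

lemma exists_totient_le_and_mul_div_totient_sub_le {q : ℕ} (hq : 0 < q) {x : ℝ} (hx : 0 ≤ x) :
    ∃ m : ℕ, (m.totient : ℝ) ≤ x ∧ x * (q / q.totient) - q ≤ m := by
  have h_totient_pos : (0 : ℝ) < q.totient := mod_cast Nat.totient_pos.2 hq
  refine ⟨q * ⌊x / q.totient⌋₊, ?_, ?_⟩
  · calc ((q * ⌊x / q.totient⌋₊).totient : ℝ) ≤ q.totient * ⌊x / q.totient⌋₊ :=
          mod_cast totient_mul_le_totient_mul q _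
      _ ≤ q.totient * (x / q.totient) := by
          gcongr
          exact Nat.floor_le (by positivity)
      _ = x := mul_div_cancel₀ x h_totient_pos.ne'
  · calc x * (q / q.totient) - q = q * (x / q.totient - 1) := by ring
      _ ≤ q * ⌊x / q.totient⌋₊ := by
          gcongr
          exact (Nat.sub_one_lt_floor _).le
      _ = (q * ⌊x / q.totient⌋₊ : ℕ) := by push_cast; rfl

lemma primorial_div_totient_primorial (a : ℕ) :
    (primorial a : ℝ) / (primorial a).totient = exp (logMertensProduct a) := by
  have h_sum : ∑ p ∈ (primorial a).primeFactors, logEulerFactor 1 p = logMertensProduct a := by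
    rw [primeFactors_primorial, logMertensProduct]
    exact sum_filter_of_ne fun p _ hp => by_contra fun h_not_prime => hp (if_neg h_not_prime)
  rw [← h_sum, div_eq_iff, mul_comm, totient_mul_exp_sum_logEulerFactor]
  exact Nat.cast_ne_zero.2 (Nat.totient_pos.2 (primorial_pos a)).ne'

theorem eventually_exists_totient_le_and_mul_log_log_le {c : ℝ}
    (hc : c < exp eulerMascheroniConstant) :
    ∀ᶠ x : ℝ in atTop, ∃ m : ℕ, (m.totient : ℝ) ≤ x ∧ c * (x * log (log x)) ≤ m := by
  obtain ⟨b, hcb, hb⟩ := exists_between hc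
  have h_log_four : 0 < log 4 := log_pos (by norm_num)
  have h_scale : Tendsto (fun x => log x / log 4) atTop atTop :=
    tendsto_log_atTop.atTop_div_const h_log_four
  filter_upwards [eventually_gt_atTop 1, h_scale.eventually_gt_atTop 1,
    h_scale.eventually (tendsto_exp_logMertensProduct_floor_div_log.eventually_const_le hb),
    eventually_add_mul_log_log_le hcb (1 + b * log (log 4))] with x hx h_one h_mertens h_slack
  have h_log_pos : 0 < log x := log_pos hx
  set a := ⌊log x / log 4⌋₊
  have h_four_pow : (4 : ℝ) ^ a ≤ x := by
    rw [← log_le_log_iff (by positivity) (by positivity), log_pow, ← le_div_iff₀ h_log_four]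
    exact Nat.floor_le (by positivity)
  have h_primorial : (primorial a : ℝ) ≤ x :=
    le_trans (mod_cast primorial_le_four_pow a) h_four_pow
  obtain ⟨m, h_totient, hm⟩ :=
    exists_totient_le_and_mul_div_totient_sub_le (primorial_pos a) (zero_le_one.trans hx.le)
  refine ⟨m, h_totient, ?_⟩
  rw [primorial_div_totient_primorial] at hm
  rw [le_div_iff₀ (log_pos h_one), log_div h_log_pos.ne' h_log_four.ne'] at h_mertens
  calc c * (x * log (log x)) = x * (c * log (log x)) := by ring
    _ ≤ x * (exp (logMertensProduct a) - 1) := by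
        gcongr
        linarith
    _ ≤ m := by linarith

end Totient

end TotientMertens

open TotientMertens Filter in
/-- If `M x` is the greatest positive integer `m` with `φ(m) ≤ x` (for `x ≥ 1`),
then `M x ∼ e^γ · x · log log x` as `x → +∞`. -/
theorem max_totient_preimage_asymptotic (M : ℝ → ℕ)
    (hM : ∀ x : ℝ, 1 ≤ x →
      0 < M x ∧ (Nat.totient (M x) : ℝ) ≤ x ∧
        ∀ m : ℕ, 0 < m → (Nat.totient m : ℝ) ≤ x → m ≤ M x) :
    Filter.Tendsto (fun x : ℝ => (M x : ℝ) / (x * Real.log (Real.log x)))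
      Filter.atTop (nhds (Real.exp Real.eulerMascheroniConstant)) := by
  have h_pos : ∀ᶠ x : ℝ in atTop, 0 < x * Real.log (Real.log x) :=
    (tendsto_id.atTop_mul_atTop₀ tendsto_log_log_atTop).eventually_gt_atTop 0
  refine tendsto_order.2 ⟨fun c hc => ?_, fun c hc => ?_⟩ <;>
    obtain ⟨b, hb₁, hb₂⟩ := exists_between hc
  · filter_upwards [h_pos, eventually_ge_atTop 1,
      eventually_exists_totient_le_and_mul_log_log_le hb₂] with x hx_pos hx ⟨m, h_totient, hm⟩
    have h_max : m ≤ M x :=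
      m.eq_zero_or_pos.elim (fun h => h ▸ Nat.zero_le _) fun h => (hM x hx).2.2 m h h_totient
    exact hb₁.trans_le ((le_div_iff₀ hx_pos).2 (hm.trans (mod_cast h_max)))
  · filter_upwards [h_pos, eventually_ge_atTop 1,
      eventually_le_mul_log_log_of_totient_le hb₁] with x hx_pos hx h_upper
    exact ((div_le_iff₀ hx_pos).2 (h_upper _ (hM x hx).2.1)).trans_lt hb₂
end

section
/- Let b ≥ 2 be an integer. There exist a positive real constant C (depending only on b) and a real n₀ such that for every integer n ≥ n₀ there is a positive integer m with m > C · log n · log log log n and with b^m − 1 dividing Λ_n, the least common multiple of 1, 2, …, n. -/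
/-!
The prime powers dividing `b ^ m - 1` are small: by lifting the exponent, if `p` is an odd prime and
`d` is the order of `b` modulo `p`, then the `p`-part of `b ^ m - 1` divides `Φ_d(b) * m`, where
`d ∣ m`, so it is at most `(b + 1) ^ φ(m) * m`; the `2`-part divides `(b ^ 2 - 1) * m`. Hence
`b ^ m - 1` divides `lcm(1, …, n)` as soon as `(b + 1) ^ (φ(m) + 1) * m ≤ n`, and it remains to find
`m` large with `φ(m)` of order at most `log n`. Take `m = P * k` with `P` a primorial: then
`φ(m) ≤ φ(P) * k`, while `P / φ(P)` is the sum of the reciprocals of the integers composed of primes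
dividing `P`, which contains a harmonic sum. Since `P` may be as large as `log n`, the harmonic sum
has length of order `log log n`, and the gain `m / φ(m)` is of order `log log log n`.
-/

open Filter Finset Polynomial
open scoped Nat

section PrimePowers

theorem emultiplicity_pow_sub_one_eq_eval_cyclotomic {R : Type*} [CommRing R] [IsDomain R]
    {q b : R} (hq : Prime q) {d : ℕ} (hd : 0 < d)
    (hmin : ∀ e ∈ d.properDivisors, ¬ q ∣ b ^ e - 1) :
    emultiplicity q (b ^ d - 1) = emultiplicity q ((cyclotomic d R).eval b) := by
  have hfactor : b ^ d - 1 =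
      (cyclotomic d R).eval b * ∏ e ∈ d.properDivisors, (cyclotomic e R).eval b := by
    have h := congrArg (eval b) (prod_cyclotomic_eq_X_pow_sub_one hd R)
    rw [← Nat.cons_self_properDivisors hd.ne', prod_cons, eval_mul, eval_prod] at h
    simpa using h.symm
  have hcofactor : ¬ q ∣ ∏ e ∈ d.properDivisors, (cyclotomic e R).eval b := by
    rw [hq.dvd_finsetProd_iff]
    rintro ⟨e, he, hqe⟩
    refine hmin e he (hqe.trans ?_)
    simpa using eval_dvd (x := b) (cyclotomic.dvd_X_pow_sub_one e R)
  rw [hfactor, emultiplicity_mul hq, emultiplicity_eq_zero.mpr hcofactor, add_zero]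

theorem intCast_dvd_pow_sub_one_iff_orderOf_dvd (p : ℕ) (b : ℤ) (m : ℕ) :
    (p : ℤ) ∣ b ^ m - 1 ↔ orderOf (b : ZMod p) ∣ m := by
  rw [orderOf_dvd_iff_pow_eq_one, ← ZMod.intCast_zmod_eq_zero_iff_dvd]
  push_cast
  exact sub_eq_zero

theorem not_dvd_of_dvd_pow_sub_one {R : Type*} [CommRing R] {q b : R} (hq : ¬ IsUnit q) {m : ℕ}
    (hm : m ≠ 0) (h : q ∣ b ^ m - 1) : ¬ q ∣ b := fun hqb =>
  hq <| isUnit_of_dvd_one <| (dvd_sub_right (hqb.trans (dvd_pow_self b hm))).mp h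

theorem pow_dvd_eval_cyclotomic_orderOf_mul {p a m : ℕ} {b : ℤ} (hp : p.Prime) (hodd : Odd p)
    (hm : m ≠ 0) (h : (p : ℤ) ^ a ∣ b ^ m - 1) :
    (p : ℤ) ^ a ∣ (cyclotomic (orderOf (b : ZMod p)) ℤ).eval b * m := by
  rcases eq_or_ne a 0 with rfl | ha
  · simp
  have hpZ : Prime (p : ℤ) := Nat.prime_iff_prime_int.mp hp
  have hpm : (p : ℤ) ∣ b ^ m - 1 := (dvd_pow_self _ ha).trans h
  set d := orderOf (b : ZMod p)
  obtain ⟨k, rfl⟩ : d ∣ m := (intCast_dvd_pow_sub_one_iff_orderOf_dvd p b m).mp hpm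
  have hd : 0 < d := Nat.pos_of_ne_zero (left_ne_zero_of_mul hm)
  have hpd : (p : ℤ) ∣ b ^ d - 1 := (intCast_dvd_pow_sub_one_iff_orderOf_dvd p b d).mpr dvd_rfl
  have hpb : ¬ (p : ℤ) ∣ b ^ d := fun hdvd =>
    not_dvd_of_dvd_pow_sub_one hpZ.not_isUnit hm hpm (hpZ.dvd_of_dvd_pow hdvd)
  have hmin : ∀ e ∈ d.properDivisors, ¬ (p : ℤ) ∣ b ^ e - 1 := by
    intro e he hpe
    have hde : d ∣ e := (intCast_dvd_pow_sub_one_iff_orderOf_dvd p b e).mp hpe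
    obtain ⟨hed, hlt⟩ := Nat.mem_properDivisors.mp he
    exact hlt.ne (Nat.dvd_antisymm hed hde)
  have hlift : emultiplicity (p : ℤ) (b ^ (d * k) - 1) =
      emultiplicity (p : ℤ) ((cyclotomic d ℤ).eval b * k) := by
    rw [pow_mul, ← one_pow k, Int.emultiplicity_pow_sub_pow hp hodd hpd hpb,
      emultiplicity_pow_sub_one_eq_eval_cyclotomic hpZ hd hmin, emultiplicity_mul hpZ,
      Int.natCast_emultiplicity]
  calc (p : ℤ) ^ a ∣ (cyclotomic d ℤ).eval b * k := by
        rwa [pow_dvd_iff_le_emultiplicity, ← hlift, ← pow_dvd_iff_le_emultiplicity]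
    _ ∣ (cyclotomic d ℤ).eval b * (d * k : ℕ) := by
        push_cast
        exact mul_dvd_mul_left _ (Dvd.intro_left _ rfl)

theorem two_pow_dvd_sq_sub_one_mul {a m : ℕ} {b : ℤ} (hm : m ≠ 0)
    (h : (2 : ℤ) ^ a ∣ b ^ m - 1) : (2 : ℤ) ^ a ∣ (b ^ 2 - 1) * m := by
  rcases eq_or_ne a 0 with rfl | ha
  · simp
  have hb : ¬ 2 ∣ b :=
    not_dvd_of_dvd_pow_sub_one Int.prime_two.not_isUnit hm ((dvd_pow_self _ ha).trans h)
  have hfour : 4 ∣ b ^ 2 - 1 :=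
    dvd_trans (by norm_num) (Int.eight_dvd_sq_sub_one_of_odd (Int.not_even_iff_odd.mp
      (even_iff_two_dvd.not.mpr hb)))
  have hlift : emultiplicity 2 ((b ^ 2) ^ m - 1) = emultiplicity 2 ((b ^ 2 - 1) * (m : ℤ)) := by
    rw [← one_pow m, Int.two_pow_sub_pow' m hfour (fun h2 => hb (Int.prime_two.dvd_of_dvd_pow h2)),
      emultiplicity_mul Int.prime_two, one_pow]
  have hsq : b ^ m - 1 ∣ (b ^ 2) ^ m - 1 := ⟨b ^ m + 1, by ring⟩
  rw [pow_dvd_iff_le_emultiplicity, ← hlift, ← pow_dvd_iff_le_emultiplicity]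
  exact h.trans hsq

theorem eval_cyclotomic_le_add_one_pow_totient {b : ℤ} (hb : 1 < b) (d : ℕ) :
    (cyclotomic d ℤ).eval b ≤ (b + 1) ^ φ d := by
  have h := cyclotomic_eval_le_add_one_pow_totient (q := (b : ℝ)) (mod_cast hb) d
  rw [← map_cyclotomic_int d ℝ, eval_intCast_map, eq_intCast] at h
  exact_mod_cast h

theorem prime_pow_le_of_dvd_pow_sub_one {b m p a : ℕ} (hb : 2 ≤ b) (hm : 0 < m) (hp : p.Prime)
    (h : p ^ a ∣ b ^ m - 1) : p ^ a ≤ (b + 1) ^ (φ m + 1) * m := by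
  rcases eq_or_ne a 0 with rfl | ha
  · rw [pow_zero]
    exact Nat.succ_le_of_lt (by positivity)
  have hb' : (1 : ℤ) < b := mod_cast hb
  have hm' : (0 : ℤ) < m := mod_cast hm
  have hφ : 0 < φ m := Nat.totient_pos.mpr hm
  have hZ : (p : ℤ) ^ a ∣ (b : ℤ) ^ m - 1 := by
    have := Int.natCast_dvd_natCast.mpr h
    rwa [Nat.cast_pred (by positivity), Nat.cast_pow, Nat.cast_pow] at this
  suffices (p : ℤ) ^ a ≤ (b + 1) ^ (φ m + 1) * m by exact_mod_cast this
  rcases hp.eq_two_or_odd' with rfl | hodd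
  · calc (2 : ℤ) ^ a ≤ (b ^ 2 - 1) * m :=
          Int.le_of_dvd (mul_pos (by nlinarith) hm') (two_pow_dvd_sq_sub_one_mul hm.ne' hZ)
      _ ≤ (b + 1) ^ 2 * m := by gcongr; nlinarith
      _ ≤ (b + 1) ^ (φ m + 1) * m := by gcongr <;> lia
  · set d := orderOf ((b : ℤ) : ZMod p)
    have hdm : d ∣ m :=
      (intCast_dvd_pow_sub_one_iff_orderOf_dvd p b m).mp ((dvd_pow_self _ ha).trans hZ)
    have hφd : φ d ≤ φ m := Nat.le_of_dvd hφ (Nat.totient_dvd_of_dvd hdm)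
    calc (p : ℤ) ^ a ≤ (cyclotomic d ℤ).eval (b : ℤ) * m :=
          Int.le_of_dvd (mul_pos (cyclotomic_pos' d hb') hm')
            (pow_dvd_eval_cyclotomic_orderOf_mul hp hodd hm.ne' hZ)
      _ ≤ (b + 1) ^ φ d * m := by gcongr; exact eval_cyclotomic_le_add_one_pow_totient hb' d
      _ ≤ (b + 1) ^ (φ m + 1) * m := by gcongr <;> lia

theorem dvd_lcm_Icc_of_prime_pow_le {N n : ℕ}
    (h : ∀ p a : ℕ, p.Prime → p ^ a ∣ N → p ^ a ≤ n) : N ∣ (Icc 1 n).lcm id :=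
  (Nat.dvd_iff_prime_pow_dvd_dvd _ _).mpr fun p a hp hpa =>
    dvd_lcm (f := id) (mem_Icc.mpr ⟨Nat.one_le_pow _ _ hp.pos, h p a hp hpa⟩)

theorem pow_sub_one_dvd_lcm_Icc {b m n : ℕ} (hb : 2 ≤ b) (hm : 0 < m)
    (h : (b + 1) ^ (φ m + 1) * m ≤ n) : b ^ m - 1 ∣ (Icc 1 n).lcm id :=
  dvd_lcm_Icc_of_prime_pow_le fun _ _ hp hpa =>
    (prime_pow_le_of_dvd_pow_sub_one hb hm hp hpa).trans h

end PrimePowers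

section Totient

theorem hasSum_inv_factoredNumbers_primeFactors {N : ℕ} (hN : N ≠ 0) :
    HasSum (fun i : Nat.factoredNumbers N.primeFactors => (i : ℝ)⁻¹) (N / φ N) := by
  let f : ℕ →* ℝ := invMonoidHom.comp (Nat.castRingHom ℝ : ℕ →* ℝ)
  have hf : ∀ {p : ℕ}, p.Prime → ‖f p‖ < 1 := fun {p} hp => by
    simpa [f] using inv_lt_one_of_one_lt₀ (Nat.one_lt_cast.mpr hp.one_lt)
  have hprod : ∏ p ∈ N.primeFactors with p.Prime, (1 - f p)⁻¹ = (N : ℝ) / φ N := by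
    have htotient : (φ N : ℝ) = N * ∏ p ∈ N.primeFactors, (1 - (p : ℝ)⁻¹) := by
      have hℚ := congrArg (Rat.cast (K := ℝ)) (Nat.totient_eq_mul_prod_factors N)
      push_cast at hℚ
      exact hℚ
    rw [filter_true_of_mem fun p hp => Nat.prime_of_mem_primeFactors hp, prod_inv_distrib,
      htotient, div_mul_cancel_left₀ (Nat.cast_ne_zero.mpr hN)]
    rfl
  rw [← hprod]
  exact (EulerProduct.summable_and_hasSum_factoredNumbers_prod_filter_prime_geometric hf _).2

theorem harmonic_mul_totient_le {N n : ℕ} (h : ∀ p : ℕ, p.Prime → p ≤ n → p ∣ N) :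
    (harmonic n : ℝ) * φ N ≤ N := by
  rcases eq_or_ne N 0 with rfl | hN
  · simp
  have hmem : ∀ i ∈ Icc 1 n, i ∈ Nat.factoredNumbers N.primeFactors := fun i hi => by
    obtain ⟨hi1, hin⟩ := mem_Icc.mp hi
    refine Nat.mem_factoredNumbers'.mpr fun p hp hpi => ?_
    exact hp.mem_primeFactors (h p hp ((Nat.le_of_dvd hi1 hpi).trans hin)) hN
  have hsum : (harmonic n : ℝ) ≤ N / φ N := by
    rw [harmonic_eq_sum_Icc]
    push_cast
    rw [← sum_subtype_of_mem _ hmem]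
    exact sum_le_hasSum _ (fun i _ => by positivity) (hasSum_inv_factoredNumbers_primeFactors hN)
  exact (le_div_iff₀ (by simpa using Nat.pos_of_ne_zero hN)).mp hsum

theorem log_add_one_mul_totient_primorial_le (n : ℕ) :
    Real.log (n + 1) * φ (primorial n) ≤ primorial n :=
  calc Real.log (n + 1) * φ (primorial n) ≤ harmonic n * φ (primorial n) := by
        gcongr
        exact_mod_cast log_add_one_le_harmonic n
    _ ≤ primorial n := harmonic_mul_totient_le fun _ hp hpn => hp.dvd_primorial_iff.mpr hpn

theorem totient_mul_le_totient_mul (a b : ℕ) : φ (a * b) ≤ φ a * b := by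
  induction b using induction_on_primes with
  | zero => simp
  | one => simp
  | prime_mul p b hp ih =>
    have hprime : φ (p * (a * b)) ≤ p * φ (a * b) := by
      by_cases hd : p ∣ a * b
      · exact (Nat.totient_mul_of_prime_of_dvd hp hd).le
      · rw [Nat.totient_mul_of_prime_of_not_dvd hp hd]
        exact Nat.mul_le_mul_right _ (Nat.sub_le _ _)
    calc φ (a * (p * b)) = φ (p * (a * b)) := by rw [Nat.mul_left_comm]
      _ ≤ p * φ (a * b) := hprime
      _ ≤ p * (φ a * b) := Nat.mul_le_mul_left _ ih
      _ = φ a * (p * b) := Nat.mul_left_comm ..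

theorem exists_totient_le_and_mul_log_le {x : ℕ} (hx : x ≠ 0) :
    ∃ m : ℕ, 0 < m ∧ φ m ≤ x ∧ m ≤ x ^ 2 ∧ x * Real.log (Nat.log 4 x + 1) ≤ 2 * m := by
  set y := Nat.log 4 x
  set P := primorial y
  set k := x / φ P
  have hP : 0 < P := primorial_pos y
  have hφ : 0 < φ P := Nat.totient_pos.mpr hP
  have hPx : P ≤ x := (primorial_le_four_pow y).trans (Nat.pow_log_le_self 4 hx)
  have hk : 0 < k := Nat.div_pos ((Nat.totient_le P).trans hPx) hφ
  have hx_le : x ≤ 2 * (k * φ P) := by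
    have hlt : x < (k + 1) * φ P := Nat.lt_mul_of_div_lt (Nat.lt_succ_self k) hφ
    nlinarith
  refine ⟨P * k, Nat.mul_pos hP hk, ?_, ?_, ?_⟩
  · calc φ (P * k) ≤ φ P * k := totient_mul_le_totient_mul P k
      _ ≤ x := Nat.mul_div_le x _
  · calc P * k ≤ x * x := Nat.mul_le_mul hPx (Nat.div_le_self x _)
      _ = x ^ 2 := (sq x).symm
  · have hlog : 0 ≤ Real.log ((y : ℝ) + 1) := Real.log_nonneg (by simp)
    calc x * Real.log (y + 1) ≤ 2 * (k * φ P) * Real.log (y + 1) := by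
          gcongr
          exact_mod_cast hx_le
      _ = 2 * k * (Real.log (y + 1) * φ P) := by ring
      _ ≤ 2 * k * P := by gcongr; exact log_add_one_mul_totient_primorial_le y
      _ = 2 * (P * k : ℕ) := by push_cast; ring

end Totient

section IteratedLog

theorem tendsto_natLog_atTop {a : ℕ} (ha : 1 < a) : Tendsto (Nat.log a) atTop atTop :=
  tendsto_atTop_atTop_of_monotone Nat.log_monotone fun k => ⟨a ^ k, (Nat.log_pow ha k).ge⟩

theorem log_natCast_lt_natLog_add_one_mul {a : ℕ} (ha : 1 < a) (n : ℕ) :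
    Real.log n < (Nat.log a n + 1) * Real.log a := by
  rw [← div_lt_iff₀ (Real.log_pos (mod_cast ha)), Real.log_div_log, ← Real.natFloor_logb_natCast]
  exact Nat.lt_floor_add_one _

theorem tendsto_log_log_natCast_atTop :
    Tendsto (fun n : ℕ => Real.log (Real.log n)) atTop atTop :=
  Real.tendsto_log_atTop.comp (Real.tendsto_log_atTop.comp tendsto_natCast_atTop_atTop)

theorem log_log_natCast_le {a b n : ℕ} (ha : 1 < a) (hb : 1 < b) (hn : 1 < n) :
    Real.log (Real.log n) ≤
      (Nat.log a (Nat.log b n) + 1) * Real.log a + Real.log (Real.log b) := by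
  have ha0 : (a : ℝ) ≠ 0 := Nat.cast_ne_zero.mpr (by lia)
  have hlogb : 0 < Real.log b := Real.log_pos (mod_cast hb)
  have hpow : (Nat.log b n + 1 : ℝ) ≤ a ^ (Nat.log a (Nat.log b n) + 1) := by
    exact_mod_cast Nat.lt_pow_succ_log_self ha (Nat.log b n)
  have hlog : Real.log n ≤ a ^ (Nat.log a (Nat.log b n) + 1) * Real.log b :=
    (log_natCast_lt_natLog_add_one_mul hb n).le.trans (by gcongr)
  calc Real.log (Real.log n)
      ≤ Real.log (a ^ (Nat.log a (Nat.log b n) + 1) * Real.log b) :=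
        Real.log_le_log (Real.log_pos (mod_cast hn)) hlog
    _ = (Nat.log a (Nat.log b n) + 1) * Real.log a + Real.log (Real.log b) := by
        rw [Real.log_mul (pow_ne_zero _ ha0) hlogb.ne', Real.log_pow, Nat.cast_add_one]

theorem eventually_log_log_log_le {a b : ℕ} (ha : 1 < a) (hb : 1 < b) :
    ∀ᶠ n : ℕ in atTop, Real.log (Real.log (Real.log n)) ≤
      2 * Real.log (Nat.log a (Nat.log b n) + 1) := by
  have hlarge := (tendsto_natCast_atTop_atTop (R := ℝ)).comp
    ((tendsto_natLog_atTop ha).comp (tendsto_natLog_atTop hb))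
  filter_upwards [hlarge.eventually_ge_atTop (Real.log a + |Real.log (Real.log b)|),
    tendsto_log_log_natCast_atTop.eventually_gt_atTop 0, eventually_gt_atTop 1]
    with n hy hpos hn
  set y := Nat.log a (Nat.log b n)
  have hy' : Real.log a + |Real.log (Real.log b)| ≤ y := hy
  have hsq : Real.log (Real.log n) ≤ ((y : ℝ) + 1) ^ 2 := by
    have hle := log_log_natCast_le ha hb hn
    have habs := le_abs_self (Real.log (Real.log b))
    have := mul_le_mul_of_nonneg_left hy' (y.cast_nonneg (α := ℝ))
    have := mul_nonneg (y.cast_nonneg (α := ℝ)) (abs_nonneg (Real.log (Real.log b)))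
    nlinarith
  calc Real.log (Real.log (Real.log n)) ≤ Real.log (((y : ℝ) + 1) ^ 2) := Real.log_le_log hpos hsq
    _ = 2 * Real.log (y + 1) := by rw [Real.log_pow, Nat.cast_two]

end IteratedLog

theorem exists_mul_log_le_and_pow_sub_one_dvd_lcm {b n x : ℕ} (hb : 2 ≤ b) (hx : x ≠ 0)
    (hxn : ((2 * (b + 1)) ^ 2) ^ x ≤ n) :
    ∃ m : ℕ, 0 < m ∧ x * Real.log (Nat.log 4 x + 1) ≤ 2 * m ∧ b ^ m - 1 ∣ (Icc 1 n).lcm id := by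
  obtain ⟨m, hm, hφ, hmx, hlog⟩ := exists_totient_le_and_mul_log_le hx
  refine ⟨m, hm, hlog, pow_sub_one_dvd_lcm_Icc hb hm ?_⟩
  calc (b + 1) ^ (φ m + 1) * m ≤ (b + 1) ^ (2 * x) * (2 ^ x) ^ 2 := by
        gcongr
        · lia
        · lia
        · exact hmx.trans (Nat.pow_le_pow_left Nat.lt_two_pow_self.le 2)
    _ = ((2 * (b + 1)) ^ 2) ^ x := by
        rw [← pow_mul, ← pow_mul, mul_comm x 2, ← mul_pow, mul_comm (b + 1) 2]
    _ ≤ n := hxn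

/-- For each integer `b ≥ 2` there exist `C > 0` and `n₀` such that for every
integer `n ≥ n₀` there is a positive integer `m` with
`m > C · log n · log log log n` and `b^m − 1 ∣ lcm(1,…,n)`. -/
theorem exists_pow_sub_one_dvd_lcm (b : ℕ) (hb : 2 ≤ b) :
    ∃ C : ℝ, 0 < C ∧ ∃ n₀ : ℝ, ∀ n : ℕ, n₀ ≤ (n : ℝ) →
      ∃ m : ℕ, 0 < m ∧
        C * Real.log n * Real.log (Real.log (Real.log n)) < (m : ℝ) ∧
        b ^ m - 1 ∣ (Finset.Icc 1 n).lcm id := by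
  set B := (2 * (b + 1)) ^ 2
  have hB : 1 < B := Nat.one_lt_pow two_ne_zero (by lia)
  have hlogB : 0 < Real.log B := Real.log_pos (mod_cast hB)
  obtain ⟨N, hN⟩ := eventually_atTop.mp <| (eventually_log_log_log_le (a := 4) (by norm_num) hB).and
    ((tendsto_log_log_natCast_atTop.eventually_gt_atTop 1).and (eventually_ge_atTop B))
  refine ⟨1 / (8 * Real.log B), by positivity, N, fun n hn => ?_⟩
  obtain ⟨hlll, hll, hBn⟩ := hN n (mod_cast hn)
  have hx : 0 < Nat.log B n := Nat.log_pos hB hBn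
  obtain ⟨m, hm, hlog, hdvd⟩ := exists_mul_log_le_and_pow_sub_one_dvd_lcm hb hx.ne'
    (Nat.pow_log_le_self B (by lia))
  refine ⟨m, hm, ?_, hdvd⟩
  set x := Nat.log B n
  have hpos : 0 < Real.log (Real.log (Real.log n)) := Real.log_pos hll
  have hlogn : Real.log n < 2 * x * Real.log B :=
    (log_natCast_lt_natLog_add_one_mul hB n).trans_le (by gcongr; exact_mod_cast (by lia))
  calc 1 / (8 * Real.log B) * Real.log n * Real.log (Real.log (Real.log n))
      < 1 / (8 * Real.log B) * (2 * x * Real.log B) * Real.log (Real.log (Real.log n)) := by gcongr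
    _ = x * (Real.log (Real.log (Real.log n)) / 2) / 2 := by field_simp; ring
    _ ≤ x * Real.log (Nat.log 4 x + 1) / 2 := by gcongr; linarith
    _ ≤ m := by linarith
end
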